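/- Let H > 0, let Ω ⊆ ℝ² be an open connected set, and let (u_n) be a sequence of C^∞ solutions of (CMC) on Ω which is uniformly bounded on Ω (there is M with |u_n| ≤ M on Ω for all n). Then there exist a strictly increasing map φ : ℕ → ℕ and a C^∞ solution u of (CMC) on Ω such that (u_{φ(n)}) converges to u uniformly on every compact subset of Ω, together with all of its partial derivatives (C^k convergence on compact subsets for every k ∈ ℕ). -/

import Mathlib

/-!
The theorem is a compactness statement, so the work lies in interior estimates for all derivatives
of a bounded solution `u`, uniform over the family. They come in three steps, each of which is an
application of the maximum principle to an explicit function on a disk.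

* Gradient. On the graph of a solution, `ν = 1 / W` with `W = √(1 + |∇u|²)` is superharmonic, being
  the vertical component of the normal of a surface of constant mean curvature. Comparing `ν` with a
  large power of `η + c (u - M)`, where `η` is a cut-off function and `c` is small, bounds `W` near
  the centre of the disk.
* Curvature. The function `f = W⁴ (H² - K)`, with `K` the Gauss curvature, satisfies a Simons-type
  inequality `L f ≥ 4 ν² f²` where it is positive, for `L` a multiple of the Laplace–Beltrami
  operator. Since `ν` is already bounded below, a Keller–Osserman argument bounds `f`, and with it
  the second derivatives of `u`.
* Higher derivatives. A finite set of functions is called a closed system when the linear elliptic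
  operator of the equation maps its members to expressions affine in their first derivatives. The
  functions `u, W, ν, u_x, u_y, u_xx, u_xy, u_yy` form one, and adding the first derivatives of the
  members of a closed system gives another. For a locally bounded closed system with `E₀ = ∑ f²` and
  `E₁ = ∑ |∇f|²`, the computation of Bernstein gives `L (E₁ (Λ + E₀)) ≥ E₁² - C`, so the
  Keller–Osserman argument bounds the gradients too, and induction bounds all derivatives.

With these bounds, a diagonal argument and equicontinuity give a subsequence converging with all
derivatives on compact sets, and the equation passes to the limit.

The identities hold in an arbitrary `ℝ`-algebra with two commuting derivations. In the algebra of
families of smooth functions on `Ω`, they make uniformity in the index of the family automatic.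
-/

open Real MeasureTheory Filter Set

noncomputable section

/-- Euclidean norm on `ℝ × ℝ`. -/
def enorm2 (p : ℝ × ℝ) : ℝ := Real.sqrt (p.1 ^ 2 + p.2 ^ 2)

/-- Partial derivative in the `x` direction. -/
def pdx (u : ℝ × ℝ → ℝ) (p : ℝ × ℝ) : ℝ := fderiv ℝ u p (1, 0)

/-- Partial derivative in the `y` direction. -/
def pdy (u : ℝ × ℝ → ℝ) (p : ℝ × ℝ) : ℝ := fderiv ℝ u p (0, 1)

/-- The area element `W_u = √(1 + |∇u|²)`. -/
def Wgraph (u : ℝ × ℝ → ℝ) (p : ℝ × ℝ) : ℝ :=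
  Real.sqrt (1 + (pdx u p) ^ 2 + (pdy u p) ^ 2)

/-- Upward unit normal of the graph of `u`. -/
def normalVec (u : ℝ × ℝ → ℝ) (p : ℝ × ℝ) : ℝ × ℝ × ℝ :=
  (-pdx u p / Wgraph u p, -pdy u p / Wgraph u p, 1 / Wgraph u p)

/-- `u` is a (C²) solution of the constant mean curvature `H` equation on `Ω`. -/
def IsCMCSolution (H : ℝ) (Ω : Set (ℝ × ℝ)) (u : ℝ × ℝ → ℝ) : Prop :=
  ContDiffOn ℝ 2 u Ω ∧ ∀ p ∈ Ω,
    (1 + (pdy u p) ^ 2) * pdx (fun q => pdx u q) p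
      - 2 * (pdx u p) * (pdy u p) * pdy (fun q => pdx u q) p
      + (1 + (pdx u p) ^ 2) * pdy (fun q => pdy u q) p
    = 2 * H * (1 + (pdx u p) ^ 2 + (pdy u p) ^ 2) ^ ((3 : ℝ) / 2)

/-- `C` is a divergence line of the sequence `u` on `Ω`. -/
def IsDivergenceLine (H : ℝ) (Ω : Set (ℝ × ℝ)) (u : ℕ → ℝ × ℝ → ℝ)
    (C : Set (ℝ × ℝ)) : Prop :=
  ∃ z₁ : ℝ × ℝ, C ⊆ Ω ∧ (∀ q ∈ C, enorm2 (q - z₁) = 1 / (2 * H)) ∧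
    IsConnected C ∧ C.Nontrivial ∧
    ∃ φ : ℕ → ℕ, StrictMono φ ∧ ∀ Q ∈ C,
      Tendsto (fun n => normalVec (u (φ n)) Q) atTop
        (nhds (2 * H * (z₁.1 - Q.1), 2 * H * (z₁.2 - Q.2), 0))

/-- `u` is a smooth (C^∞) solution of the CMC `H` equation on `Ω`. -/
def IsSmoothCMCSolution (H : ℝ) (Ω : Set (ℝ × ℝ)) (u : ℝ × ℝ → ℝ) : Prop :=
  ContDiffOn ℝ (⊤ : ℕ∞) u Ω ∧ ∀ p ∈ Ω,
    (1 + (pdy u p) ^ 2) * pdx (fun q => pdx u q) p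
      - 2 * (pdx u p) * (pdy u p) * pdy (fun q => pdx u q) p
      + (1 + (pdx u p) ^ 2) * pdy (fun q => pdy u q) p
    = 2 * H * (1 + (pdx u p) ^ 2 + (pdy u p) ^ 2) ^ ((3 : ℝ) / 2)

open TopologicalSpace

section Families

variable {E ι : Type*} [NormedAddCommGroup E] [NormedSpace ℝ E] {Ω : Opens E}

/-- The families, indexed by `ι`, of real functions on `Ω` that are `C^∞`, as a subalgebra of the
algebra of all families of functions. Smoothness is that of the extension by zero, on `Ω`. -/
def smoothFamSubalgebra (ι : Type*) (Ω : Opens E) : Subalgebra ℝ (ι → Ω → ℝ) where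
  carrier := {f | ∀ i, ContDiffOn ℝ (⊤ : ℕ∞) (Function.extend (↑) (f i) (0 : E → ℝ)) Ω}
  mul_mem' {f g} hf hg i := by
    have hmul := Function.extend_mul ((↑) : Ω → E) (f i) (g i) 0 0
    rw [mul_zero] at hmul
    exact hmul ▸ (hf i).mul (hg i)
  add_mem' {f g} hf hg i := by
    have hadd := Function.extend_add ((↑) : Ω → E) (f i) (g i) 0 0
    rw [add_zero] at hadd
    exact hadd ▸ (hf i).add (hg i)
  algebraMap_mem' c i := by
    refine (contDiffOn_const (c := c)).congr fun x hx => ?_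
    exact Subtype.val_injective.extend_apply (fun _ : Ω => c) 0 ⟨x, hx⟩

/-- The algebra of families of `C^∞` functions on `Ω`. Treating a whole family as one element makes
bounds uniform in the index a statement about single elements, and manipulations of the equation a
matter of commutative algebra with derivations. -/
def SmoothFam (ι : Type*) (Ω : Opens E) : Type _ := smoothFamSubalgebra ι Ω

namespace SmoothFam

instance : CommRing (SmoothFam ι Ω) := inferInstanceAs (CommRing (smoothFamSubalgebra ι Ω))

instance : Algebra ℝ (SmoothFam ι Ω) := inferInstanceAs (Algebra ℝ (smoothFamSubalgebra ι Ω))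

/-- The extension by zero to the whole space of the `i`-th function of a family. -/
def extend (f : SmoothFam ι Ω) (i : ι) : E → ℝ := Function.extend (↑) (f.1 i) 0

/-- Evaluation of the `i`-th function of a family at the point `x`. -/
def evAt (i : ι) (x : Ω) : SmoothFam ι Ω →ₐ[ℝ] ℝ :=
  (Pi.evalAlgHom ℝ (fun _ : Ω => ℝ) x).comp
    ((Pi.evalAlgHom ℝ (fun _ : ι => Ω → ℝ) i).comp (smoothFamSubalgebra ι Ω).val)

lemma extend_apply (f : SmoothFam ι Ω) (i : ι) (x : Ω) : f.extend i x = evAt i x f :=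
  Subtype.val_injective.extend_apply (f.1 i) 0 x

@[ext]
lemma ext {f g : SmoothFam ι Ω} (h : ∀ i x, evAt i x f = evAt i x g) : f = g :=
  Subtype.ext (funext₂ h)

lemma extend_add (f g : SmoothFam ι Ω) (i : ι) : (f + g).extend i = f.extend i + g.extend i := by
  have hadd := Function.extend_add ((↑) : Ω → E) (f.1 i) (g.1 i) 0 0
  rw [add_zero] at hadd
  exact hadd

lemma extend_mul (f g : SmoothFam ι Ω) (i : ι) : (f * g).extend i = f.extend i * g.extend i := by
  have hmul := Function.extend_mul ((↑) : Ω → E) (f.1 i) (g.1 i) 0 0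
  rw [mul_zero] at hmul
  exact hmul

lemma extend_smul (c : ℝ) (f : SmoothFam ι Ω) (i : ι) : (c • f).extend i = c • f.extend i := by
  have hsmul := Function.extend_smul c ((↑) : Ω → E) (f.1 i) 0
  rw [smul_zero] at hsmul
  exact hsmul

lemma contDiffOn (f : SmoothFam ι Ω) (i : ι) : ContDiffOn ℝ (⊤ : ℕ∞) (f.extend i) Ω := f.2 i

lemma contDiffAt (f : SmoothFam ι Ω) (i : ι) (x : Ω) : ContDiffAt ℝ (⊤ : ℕ∞) (f.extend i) x :=
  (f.contDiffOn i).contDiffAt (Ω.isOpen.mem_nhds x.2)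

lemma differentiableAt (f : SmoothFam ι Ω) (i : ι) (x : Ω) : DifferentiableAt ℝ (f.extend i) x :=
  (f.contDiffAt i x).differentiableAt (by simp)

/-- The family of the restrictions to `Ω` of functions that are smooth on `Ω`. -/
def of (F : ι → E → ℝ) (hF : ∀ i, ContDiffOn ℝ (⊤ : ℕ∞) (F i) Ω) : SmoothFam ι Ω :=
  ⟨fun i x => F i x, fun i => (hF i).congr fun x hx =>
    Subtype.val_injective.extend_apply (fun x : Ω => F i x) 0 ⟨x, hx⟩⟩

lemma evAt_of (F : ι → E → ℝ) (hF : ∀ i, ContDiffOn ℝ (⊤ : ℕ∞) (F i) Ω) (i : ι) (x : Ω) :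
    evAt i x (of F hF) = F i x := rfl

lemma extend_of (F : ι → E → ℝ) (hF : ∀ i, ContDiffOn ℝ (⊤ : ℕ∞) (F i) Ω) (i : ι) :
    EqOn ((of F hF).extend i) (F i) Ω :=
  fun x hx => extend_apply _ i ⟨x, hx⟩

/-- The directional derivative along the constant vector `v`, as a derivation. -/
def dirDer (v : E) : Derivation ℝ (SmoothFam ι Ω) (SmoothFam ι Ω) :=
  Derivation.mk'
    { toFun := fun f => of (fun i x => fderiv ℝ (f.extend i) x v) fun i =>
        ((f.contDiffOn i).fderiv_of_isOpen Ω.isOpen (m := (⊤ : ℕ∞)) (by norm_cast)).clm_apply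
          contDiffOn_const
      map_add' := fun f g => by
        ext i x
        simp [evAt_of, extend_add, fderiv_add (f.differentiableAt i x) (g.differentiableAt i x)]
      map_smul' := fun c f => by
        ext i x
        simp [evAt_of, extend_smul, fderiv_const_smul (f.differentiableAt i x)] }
    fun f g => by
      ext i x
      simp [evAt_of, extend_mul, fderiv_mul (f.differentiableAt i x) (g.differentiableAt i x),
        extend_apply]

lemma evAt_dirDer (v : E) (f : SmoothFam ι Ω) (i : ι) (x : Ω) :
    evAt i x (dirDer v f) = fderiv ℝ (f.extend i) x v := rfl

lemma extend_dirDer (v : E) (f : SmoothFam ι Ω) (i : ι) :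
    EqOn ((dirDer v f).extend i) (fun x => fderiv ℝ (f.extend i) x v) Ω :=
  fun x hx => extend_apply (dirDer v f) i ⟨x, hx⟩

lemma evAt_dirDer_dirDer (v w : E) (f : SmoothFam ι Ω) (i : ι) (x : Ω) :
    evAt i x (dirDer v (dirDer w f)) = fderiv ℝ (fderiv ℝ (f.extend i)) x v w := by
  have hd : DifferentiableAt ℝ (fderiv ℝ (f.extend i)) x :=
    ((f.contDiffAt i x).fderiv_right (m := 1) (by norm_cast)).differentiableAt (by simp)
  rw [evAt_dirDer, ((extend_dirDer w f i).eventuallyEq_of_mem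
    (Ω.isOpen.mem_nhds x.2)).fderiv_eq, fderiv_clm_apply hd (differentiableAt_const w)]
  simp

lemma dirDer_comm (v w : E) (f : SmoothFam ι Ω) :
    dirDer v (dirDer w f) = dirDer w (dirDer v f) := by
  ext i x
  rw [evAt_dirDer_dirDer, evAt_dirDer_dirDer]
  refine ((f.contDiffAt i x).isSymmSndFDerivAt ?_).eq v w
  rw [minSmoothness_of_isRCLikeNormedField]
  norm_cast

end SmoothFam

end Families

open SmoothFam

section MaximumPrinciple

lemma deriv_deriv_nonpos_of_isLocalMax {g : ℝ → ℝ} {x : ℝ} (hg : ContinuousAt g x)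
    (h : IsLocalMax g x) : deriv (deriv g) x ≤ 0 := by
  by_contra! hpos
  have hmin : IsLocalMin g x := isLocalMin_of_deriv_deriv_pos hpos h.deriv_eq_zero hg
  have hconst : g =ᶠ[nhds x] fun _ => g x := by
    filter_upwards [h, hmin] with y h₁ h₂ using le_antisymm h₁ h₂
  simp [hconst.deriv.deriv_eq] at hpos

lemma fderiv_fderiv_nonpos_of_isLocalMax {E : Type*} [NormedAddCommGroup E] [NormedSpace ℝ E]
    {g : E → ℝ} {x : E} (hg : ContDiffAt ℝ 2 g x) (h : IsLocalMax g x) (v : E) :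
    fderiv ℝ (fderiv ℝ g) x v v ≤ 0 := by
  set line : ℝ → E := fun t => x + t • v
  have hline (t : ℝ) : HasDerivAt line v t := by
    simpa [line] using ((hasDerivAt_id t).smul_const v).const_add x
  have htend : Tendsto line (nhds 0) (nhds x) := by
    simpa [line] using (hline 0).continuousAt.tendsto
  have hdiff : ∀ᶠ y in nhds x, DifferentiableAt ℝ g y :=
    (hg.eventually (by simp)).mono fun y hy => hy.differentiableAt (by simp)
  have hfirst : deriv (g ∘ line) =ᶠ[nhds 0] fun t => fderiv ℝ g (line t) v := by
    filter_upwards [htend.eventually hdiff] with t ht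
    exact (ht.hasFDerivAt.comp_hasDerivAt t (hline t)).deriv
  have hline0 : line 0 = x := by simp [line]
  have hsecond : deriv (deriv (g ∘ line)) 0 = fderiv ℝ (fderiv ℝ g) x v v := by
    have hd : DifferentiableAt ℝ (fderiv ℝ g) (line 0) := by
      rw [hline0]
      exact (hg.fderiv_right (m := 1) (by norm_num)).differentiableAt (by simp)
    rw [hfirst.deriv_eq, ← hline0]
    exact ((hd.hasFDerivAt.comp_hasDerivAt 0 (hline 0)).clm_apply
      (hasDerivAt_const (0 : ℝ) v)).deriv.trans (by simp)
  rw [← hsecond]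
  refine deriv_deriv_nonpos_of_isLocalMax
    (hg.continuousAt.comp_of_eq (hline 0).continuousAt hline0) ?_
  simpa [IsLocalMax, IsMaxFilter, hline0] using htend.eventually h

variable {ι : Type*} {Ω : Opens (ℝ × ℝ)}

/-- The partial derivative in `x`. -/
def dX : Derivation ℝ (SmoothFam ι Ω) (SmoothFam ι Ω) := dirDer (1, 0)

/-- The partial derivative in `y`. -/
def dY : Derivation ℝ (SmoothFam ι Ω) (SmoothFam ι Ω) := dirDer (0, 1)

lemma dX_dY_comm (f : SmoothFam ι Ω) : dX (dY f) = dY (dX f) := dirDer_comm _ _ f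

lemma dirDer_eq (v : ℝ × ℝ) (f : SmoothFam ι Ω) : dirDer v f = v.1 • dX f + v.2 • dY f := by
  ext i x
  have hv : v = v.1 • (1, 0) + v.2 • (0, 1) := by ext <;> simp
  rw [evAt_dirDer, hv]
  simp [dX, dY, evAt_dirDer, -Prod.smul_mk, -Prod.mk_add_mk]

lemma evAt_dirDer_eq_zero_of_isLocalMax {f : SmoothFam ι Ω} {i : ι} {x : Ω}
    (hmax : IsLocalMax (f.extend i) x) (v : ℝ × ℝ) : evAt i x (dirDer v f) = 0 := by
  rw [evAt_dirDer, hmax.fderiv_eq_zero, zero_apply]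

lemma evAt_dirDer_dirDer_nonpos_of_isLocalMax {f : SmoothFam ι Ω} {i : ι} {x : Ω}
    (hmax : IsLocalMax (f.extend i) x) (v : ℝ × ℝ) : evAt i x (dirDer v (dirDer v f)) ≤ 0 := by
  rw [evAt_dirDer_dirDer]
  exact fderiv_fderiv_nonpos_of_isLocalMax ((f.contDiffAt i x).of_le (by norm_cast)) hmax v

lemma elliptic_nonpos_of_isLocalMax {f : SmoothFam ι Ω} {i : ι} {x : Ω}
    (hmax : IsLocalMax (f.extend i) x) {a b c : ℝ} (ha : 0 < a) (hdet : b ^ 2 ≤ a * c) :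
    a * evAt i x (dX (dX f)) + 2 * b * evAt i x (dY (dX f)) + c * evAt i x (dY (dY f)) ≤ 0 := by
  have hab := evAt_dirDer_dirDer_nonpos_of_isLocalMax hmax (a, b)
  have hy := evAt_dirDer_dirDer_nonpos_of_isLocalMax hmax (0, 1)
  simp only [dirDer_eq, map_add, Derivation.map_smul, map_smul, dX_dY_comm, smul_eq_mul,
    zero_smul, zero_add, one_smul] at hab hy
  refine le_of_mul_le_mul_left (a := a) ?_ ha
  -- `a` times the operator is the second derivative along `(a, b)` plus `(a c - b²) ∂_y²`
  linarith [mul_nonpos_of_nonneg_of_nonpos (sub_nonneg.2 hdet) hy]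

end MaximumPrinciple

section SecondOrderOperators

variable {R : Type*} [CommRing R] [Algebra ℝ R] {dx dy : Derivation ℝ R R}

/-- The second-order operators `xx ∂_x² + 2 xy ∂_x ∂_y + yy ∂_y² + x ∂_x + y ∂_y`, where `∂_x = dx`
and `∂_y = dy` are two derivations, represented by their coefficients. -/
structure DiffOp {R : Type*} [CommRing R] [Algebra ℝ R] (dx dy : Derivation ℝ R R) where
  (xx xy yy x y : R)

namespace DiffOp

/-- The action of an operator on `R`. -/
def toLinearMap (L : DiffOp dx dy) : R →ₗ[ℝ] R :=
  L.xx • (dx.toLinearMap ∘ₗ dx.toLinearMap) + (2 * L.xy) • (dy.toLinearMap ∘ₗ dx.toLinearMap)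
    + L.yy • (dy.toLinearMap ∘ₗ dy.toLinearMap) + L.x • dx.toLinearMap + L.y • dy.toLinearMap

instance : CoeFun (DiffOp dx dy) fun _ => R → R := ⟨fun L => L.toLinearMap⟩

/-- The polarised principal symbol of `L`, evaluated at the gradients of `f` and `g`. -/
def symbol (L : DiffOp dx dy) (f g : R) : R :=
  L.xx * (dx f * dx g) + L.xy * (dx f * dy g + dy f * dx g) + L.yy * (dy f * dy g)

variable (L : DiffOp dx dy)

lemma apply_def (f : R) :
    L f = L.xx * dx (dx f) + 2 * L.xy * dy (dx f) + L.yy * dy (dy f) + L.x * dx f + L.y * dy f :=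
  rfl

lemma apply_mul (f g : R) :
    L (f * g) = f * L g + g * L f + 2 * L.symbol f g := by
  simp only [apply_def, symbol, Derivation.leibniz, map_add, smul_eq_mul]
  ring

lemma apply_pow_add_two (f : R) (n : ℕ) :
    L (f ^ (n + 2)) = (n + 2) * f ^ n * (f * L f + (n + 1) * L.symbol f f) := by
  induction n with
  | zero => rw [zero_add, pow_two, apply_mul L]; push_cast; ring
  | succ n ih =>
    have hsymbol : L.symbol f (f ^ (n + 2)) = (n + 2) * f ^ (n + 1) * L.symbol f f := by
      simp only [symbol, Derivation.leibniz_pow, nsmul_eq_mul, smul_eq_mul, Nat.add_succ_sub_one]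
      push_cast
      ring
    rw [show n + 1 + 2 = n + 2 + 1 by ring, pow_succ', apply_mul L, ih, hsymbol]
    push_cast
    ring

end DiffOp

end SecondOrderOperators

section CMCJets

variable {R : Type*} [CommRing R] [Algebra ℝ R]

/-- The linear operator `(1 + u_y²) ∂_x² - 2 u_x u_y ∂_x ∂_y + (1 + u_x²) ∂_y²`, the principal part
of the constant mean curvature equation. -/
def ellOp (dx dy : Derivation ℝ R R) (u : R) : DiffOp dx dy :=
  ⟨1 + dy u ^ 2, -(dx u * dy u), 1 + dx u ^ 2, 0, 0⟩

/-- `W²` times the Laplace–Beltrami operator of the graph of a solution `u`. -/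
def lapOp (H : ℝ) (dx dy : Derivation ℝ R R) (u W : R) : DiffOp dx dy :=
  ⟨1 + dy u ^ 2, -(dx u * dy u), 1 + dx u ^ 2, -((2 * H) • (W * dx u)), -((2 * H) • (W * dy u))⟩

/-- The constant mean curvature equation in an `ℝ`-algebra with commuting derivations `dx`, `dy`:
`W` is a square root of `1 + |∇u|²`, `ν` is its inverse, which is the vertical component of the unit
normal, and `u` has mean curvature `H`. -/
structure IsCMCJet (H : ℝ) (dx dy : Derivation ℝ R R) (u W ν : R) : Prop where
  comm : ∀ f, dx (dy f) = dy (dx f)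
  sq : W ^ 2 = 1 + dx u ^ 2 + dy u ^ 2
  inv : W * ν = 1
  eqn : ellOp dx dy u u = (2 * H) • W ^ 3

/-- `W⁴ (H² - K)`, with `K` the Gauss curvature of the graph: up to the weight, the squared modulus
of the Hopf differential. -/
def hopfSq (H : ℝ) (dx dy : Derivation ℝ R R) (u : R) : R :=
  H ^ 2 • (1 + dx u ^ 2 + dy u ^ 2) ^ 2 - (dx (dx u) * dy (dy u) - dy (dx u) ^ 2)

variable {H : ℝ} {dx dy : Derivation ℝ R R} {u W ν : R}

lemma ellOp_apply (f : R) : ellOp dx dy u f = (1 + dy u ^ 2) * dx (dx f)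
    - 2 * (dx u * dy u) * dy (dx f) + (1 + dx u ^ 2) * dy (dy f) := by
  simp only [ellOp, DiffOp.apply_def]
  ring

lemma lapOp_apply (f : R) : lapOp H dx dy u W f =
    ellOp dx dy u f - (2 * H) • (W * (dx u * dx f + dy u * dy f)) := by
  simp only [lapOp, ellOp, DiffOp.apply_def, Algebra.smul_def]
  ring

lemma lapOp_symbol (f g : R) : (lapOp H dx dy u W).symbol f g = (ellOp dx dy u).symbol f g := rfl

namespace IsCMCJet

variable (h : IsCMCJet H dx dy u W ν)

include h

lemma derivation_W (d : Derivation ℝ R R) : d W = ν * (dx u * d (dx u) + dy u * d (dy u)) := by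
  have hsq : (2 : ℝ) • (W * d W) = (2 : ℝ) • (dx u * d (dx u) + dy u * d (dy u)) := by
    have hd := congrArg d h.sq
    simp only [pow_two, map_add, Derivation.leibniz, Derivation.map_one_eq_zero, smul_eq_mul] at hd
    rw [two_smul, two_smul]
    linear_combination hd
  linear_combination ν * smul_right_injective R (two_ne_zero' ℝ) hsq - d W * h.inv

lemma derivation_ν (d : Derivation ℝ R R) :
    d ν = -ν ^ 3 * (dx u * d (dx u) + dy u * d (dy u)) := by
  have hd := congrArg d h.inv
  simp only [Derivation.leibniz, Derivation.map_one_eq_zero, smul_eq_mul, h.derivation_W] at hd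
  linear_combination ν * hd - d ν * h.inv

lemma derivation_eqn (d : Derivation ℝ R R) :
    d (ellOp dx dy u u) = (6 * H) • (W * (dx u * d (dx u) + dy u * d (dy u))) := by
  rw [h.eqn, Derivation.map_smul, Derivation.leibniz_pow, h.derivation_W d]
  simp only [smul_eq_mul, Algebra.smul_def (_ : ℝ), nsmul_eq_mul, map_mul, map_ofNat,
    Nat.cast_ofNat]
  linear_combination 6 * algebraMap ℝ R H * W * (dx u * d (dx u) + dy u * d (dy u)) * h.inv

lemma derivation_derivation_eqn (d d' : Derivation ℝ R R) :
    d' (d (ellOp dx dy u u)) = (6 * H) • (ν * (dx u * d' (dx u) + dy u * d' (dy u)) *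
        (dx u * d (dx u) + dy u * d (dy u))
      + W * (d' (dx u) * d (dx u) + dx u * d' (d (dx u))
        + (d' (dy u) * d (dy u) + dy u * d' (d (dy u))))) := by
  rw [h.derivation_eqn d, Derivation.map_smul]
  congr 1
  simp only [Derivation.leibniz, map_add, smul_eq_mul, h.derivation_W d']
  ring

lemma lapOp_self : lapOp H dx dy u W u = (2 * H) • W := by
  rw [lapOp_apply, h.eqn, ← smul_sub]
  congr 1
  linear_combination W * h.sq

end IsCMCJet

end CMCJets

section NormalJets

/-- The fourth-order jet of a graph of constant mean curvature at a point where `u_y = 0`. Here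
`p` is `u_x`, the numbers `r`, `s`, `t` are the second derivatives `u_xx`, `u_xy`, `u_yy`, and `uᵢⱼ`
is `∂_x^i ∂_y^j u`; `k` is the mean curvature divided by `√(1 + |∇u|²)`. The relations are the
equation and its derivatives. -/
structure NormalJet where
  (k p r s t u₃₀ u₂₁ u₁₂ u₀₃ u₄₀ u₃₁ u₂₂ u₁₃ u₀₄ : ℝ)
  eqn : r + (1 + p ^ 2) * t = 2 * k * (1 + p ^ 2) ^ 2
  eqn_x : u₃₀ - 2 * p * s ^ 2 + 2 * p * r * t + (1 + p ^ 2) * u₁₂ = 6 * k * (1 + p ^ 2) * (p * r)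
  eqn_y : u₂₁ + (1 + p ^ 2) * u₀₃ = 6 * k * (1 + p ^ 2) * (p * s)
  eqn_xx : u₄₀ + (1 + p ^ 2) * u₂₂ - 2 * s ^ 2 * r - 6 * p * s * u₂₁ + 2 * r ^ 2 * t
    + 2 * p * u₃₀ * t + 4 * p * r * u₁₂
    = 6 * k * (p * r) ^ 2 + 6 * k * (1 + p ^ 2) * (r ^ 2 + p * u₃₀ + s ^ 2)
  eqn_xy : u₃₁ + (1 + p ^ 2) * u₁₃ + 2 * r * s * t - 2 * s ^ 3 - 2 * p * s * u₁₂ + 2 * p * r * u₀₃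
    = 6 * k * (p * r) * (p * s) + 6 * k * (1 + p ^ 2) * (s * r + p * u₂₁ + t * s)
  eqn_yy : u₂₂ + (1 + p ^ 2) * u₀₄ + 2 * r * t ^ 2 - 2 * s ^ 2 * t
    + 2 * p * s * u₀₃ - 2 * p * t * u₁₂
    = 6 * k * (p * s) ^ 2 + 6 * k * (1 + p ^ 2) * (s ^ 2 + p * u₁₂ + t ^ 2)

namespace NormalJet

variable (J : NormalJet)

/-- The value of `hopfSq`. -/
def f : ℝ := J.k ^ 2 * (1 + J.p ^ 2) ^ 3 - (J.r * J.t - J.s ^ 2)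

/-- The first `x`-derivative of `hopfSq`. -/
def fx : ℝ :=
  4 * J.k ^ 2 * (1 + J.p ^ 2) ^ 2 * (J.p * J.r)
    - (J.u₃₀ * J.t + J.r * J.u₁₂ - 2 * J.s * J.u₂₁)

/-- The first `y`-derivative of `hopfSq`. -/
def fy : ℝ :=
  4 * J.k ^ 2 * (1 + J.p ^ 2) ^ 2 * (J.p * J.s)
    - (J.u₂₁ * J.t + J.r * J.u₀₃ - 2 * J.s * J.u₁₂)

/-- The second `x`-derivative of `hopfSq`. -/
def fxx : ℝ :=
  8 * J.k ^ 2 * (1 + J.p ^ 2) * (J.p * J.r) ^ 2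
    + 4 * J.k ^ 2 * (1 + J.p ^ 2) ^ 2 * (J.r ^ 2 + J.p * J.u₃₀ + J.s ^ 2)
    - (J.u₄₀ * J.t + 2 * J.u₃₀ * J.u₁₂ + J.r * J.u₂₂ - 2 * J.u₂₁ ^ 2 - 2 * J.s * J.u₃₁)

/-- The second `y`-derivative of `hopfSq`. -/
def fyy : ℝ :=
  8 * J.k ^ 2 * (1 + J.p ^ 2) * (J.p * J.s) ^ 2
    + 4 * J.k ^ 2 * (1 + J.p ^ 2) ^ 2 * (J.s ^ 2 + J.p * J.u₁₂ + J.t ^ 2)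
    - (J.u₂₂ * J.t + 2 * J.u₂₁ * J.u₀₃ + J.r * J.u₀₄ - 2 * J.u₁₂ ^ 2 - 2 * J.s * J.u₁₃)

lemma f_nonneg : 0 ≤ J.f := by
  have hf : J.f = (1 + J.p ^ 2) * (J.k * (1 + J.p ^ 2) - J.t) ^ 2 + J.s ^ 2 := by
    rw [f]
    linear_combination -J.t * J.eqn
  rw [hf]
  positivity

/-- The Jacobi equation for `ν = 1 / W`, up to the factor `ν⁵`. -/
lemma jacobi : 3 * J.p ^ 2 * (J.r ^ 2 + (1 + J.p ^ 2) * J.s ^ 2)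
    - (1 + J.p ^ 2) * (J.r ^ 2 + J.s ^ 2 + J.p * J.u₃₀
      + (1 + J.p ^ 2) * (J.s ^ 2 + J.t ^ 2 + J.p * J.u₁₂))
    + 2 * J.k * (1 + J.p ^ 2) ^ 2 * J.p ^ 2 * J.r
    = -2 * (1 + J.p ^ 2) * (J.k ^ 2 * (1 + J.p ^ 2) ^ 3 + J.f) := by
  have hr : J.r = 2 * J.k * (1 + J.p ^ 2) ^ 2 - (1 + J.p ^ 2) * J.t := by linarith [J.eqn]
  have hx := J.eqn_x
  simp only [f, hr] at hx ⊢
  linear_combination (-(1 + J.p ^ 2) * J.p) * hx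

lemma simons : (1 + J.p ^ 2) *
    (J.f * (J.fxx + (1 + J.p ^ 2) * J.fyy - 2 * J.k * (1 + J.p ^ 2) * J.p * J.fx)
      - (J.fx ^ 2 + (1 + J.p ^ 2) * J.fy ^ 2))
    = 12 * J.k ^ 2 * (1 + J.p ^ 2) ^ 3 * J.f ^ 2 + 4 * J.f ^ 3
      + 4 * J.p ^ 2 * ((1 + J.p ^ 2) * (2 * J.k * (1 + J.p ^ 2) - J.t) ^ 2 + J.s ^ 2)
        * J.f ^ 2 := by
  obtain ⟨k, p, r, s, t, u₃₀, u₂₁, u₁₂, u₀₃, u₄₀, u₃₁, u₂₂, u₁₃, u₀₄, E, Ex, Ey, Exx, Exy, Eyy⟩ := J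
  simp only [f, fx, fy, fxx, fyy]
  obtain rfl : r = 2 * k * (1 + p ^ 2) ^ 2 - (1 + p ^ 2) * t := by linarith
  obtain rfl : u₂₁ = 6 * k * (1 + p ^ 2) * (p * s) - (1 + p ^ 2) * u₀₃ := by linarith
  obtain rfl : u₃₀ = 6 * k * (1 + p ^ 2) * (p * (2 * k * (1 + p ^ 2) ^ 2 - (1 + p ^ 2) * t))
      + 2 * p * s ^ 2 - 2 * p * (2 * k * (1 + p ^ 2) ^ 2 - (1 + p ^ 2) * t) * t
      - (1 + p ^ 2) * u₁₂ := by
    linarith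
  linear_combination
    (1 + p ^ 2) * (k ^ 2 * (1 + p ^ 2) ^ 3
      - ((2 * k * (1 + p ^ 2) ^ 2 - (1 + p ^ 2) * t) * t - s ^ 2)) *
     (-t * Exx + 2 * s * Exy - (2 * k * (1 + p ^ 2) ^ 2 - (1 + p ^ 2) * t) * Eyy)

end NormalJet

namespace IsCMCJet

variable {R : Type*} [CommRing R] [Algebra ℝ R] {H : ℝ} {dx dy : Derivation ℝ R R} {u W ν : R}
  (h : IsCMCJet H dx dy u W ν) (ev : R →ₐ[ℝ] ℝ)

include h

lemma ev_W_sq : ev W ^ 2 = 1 + ev (dx u) ^ 2 + ev (dy u) ^ 2 := by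
  simpa using congrArg ev h.sq

lemma ev_W_mul_ev_ν : ev W * ev ν = 1 := by
  simpa using congrArg ev h.inv

section NormalPoint

variable (hq : ev (dy u) = 0)

include hq

lemma H_mul_ev_W : H * ev W = H * ev ν * (1 + ev (dx u) ^ 2) := by
  have hsq := h.ev_W_sq ev
  rw [hq] at hsq
  linear_combination (-H * ev W) * h.ev_W_mul_ev_ν ev + H * ev ν * hsq

/-- The jet of `u` at a point where `u_y = 0`. -/
def normalJet : NormalJet where
  k := H * ev ν
  p := ev (dx u)
  r := ev (dx (dx u))
  s := ev (dy (dx u))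
  t := ev (dy (dy u))
  u₃₀ := ev (dx (dx (dx u)))
  u₂₁ := ev (dy (dx (dx u)))
  u₁₂ := ev (dy (dy (dx u)))
  u₀₃ := ev (dy (dy (dy u)))
  u₄₀ := ev (dx (dx (dx (dx u))))
  u₃₁ := ev (dy (dx (dx (dx u))))
  u₂₂ := ev (dy (dy (dx (dx u))))
  u₁₃ := ev (dy (dy (dy (dx u))))
  u₀₄ := ev (dy (dy (dy (dy u))))
  eqn := by
    have hev := congrArg ev h.eqn
    have hsq := h.ev_W_sq ev
    simp only [ellOp_apply, map_add, map_sub, map_mul, map_pow, map_one, map_smul, map_ofNat,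
      smul_eq_mul, hq] at hev hsq
    linear_combination hev + 2 * ev W ^ 2 * h.H_mul_ev_W ev hq
      + 2 * H * ev ν * (1 + ev (dx u) ^ 2) * hsq
  eqn_x := by
    have hev := congrArg ev (h.derivation_eqn dx)
    simp only [ellOp_apply, pow_two, two_mul, map_add, map_sub, map_mul, map_one, map_smul,
      smul_eq_mul, Derivation.leibniz, Derivation.map_one_eq_zero, map_zero, h.comm, hq] at hev
    linear_combination hev + 6 * ev (dx u) * ev (dx (dx u)) * h.H_mul_ev_W ev hq
  eqn_y := by
    have hev := congrArg ev (h.derivation_eqn dy)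
    simp only [ellOp_apply, pow_two, two_mul, map_add, map_sub, map_mul, map_one, map_smul,
      smul_eq_mul, Derivation.leibniz, Derivation.map_one_eq_zero, map_zero, hq] at hev
    linear_combination hev + 6 * ev (dx u) * ev (dy (dx u)) * h.H_mul_ev_W ev hq
  eqn_xx := by
    have hev := congrArg ev (h.derivation_derivation_eqn dx dx)
    simp only [ellOp_apply, pow_two, two_mul, map_add, map_sub, map_mul, map_one, map_smul,
      smul_eq_mul, Derivation.leibniz, Derivation.map_one_eq_zero, map_zero, h.comm, hq] at hev
    linear_combination hev + 6 * (ev (dx (dx u)) ^ 2 + ev (dx u) * ev (dx (dx (dx u)))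
      + ev (dy (dx u)) ^ 2) * h.H_mul_ev_W ev hq
  eqn_xy := by
    have hev := congrArg ev (h.derivation_derivation_eqn dx dy)
    simp only [ellOp_apply, pow_two, two_mul, map_add, map_sub, map_mul, map_one, map_smul,
      smul_eq_mul, Derivation.leibniz, Derivation.map_one_eq_zero, map_zero, h.comm, hq] at hev
    linear_combination hev + 6 * (ev (dx (dx u)) * ev (dy (dx u))
      + ev (dx u) * ev (dy (dx (dx u))) + ev (dy (dx u)) * ev (dy (dy u))) * h.H_mul_ev_W ev hq
  eqn_yy := by
    have hev := congrArg ev (h.derivation_derivation_eqn dy dy)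
    simp only [ellOp_apply, pow_two, two_mul, map_add, map_sub, map_mul, map_one, map_smul,
      smul_eq_mul, Derivation.leibniz, Derivation.map_one_eq_zero, map_zero, hq] at hev
    linear_combination hev + 6 * (ev (dy (dx u)) ^ 2 + ev (dx u) * ev (dy (dy (dx u)))
      + ev (dy (dy u)) ^ 2) * h.H_mul_ev_W ev hq

lemma H_sq_eq : H ^ 2 = (H * ev ν) ^ 2 * (1 + ev (dx u) ^ 2) := by
  linear_combination (-H ^ 2 * ev ν * ev W - H ^ 2) * h.ev_W_mul_ev_ν ev
    + H ^ 2 * ev ν ^ 2 * (h.ev_W_sq ev).trans (by rw [hq]; ring : _ = 1 + ev (dx u) ^ 2)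

lemma ev_hopfSq : ev (hopfSq H dx dy u) = (h.normalJet ev hq).f := by
  simp only [hopfSq, NormalJet.f, normalJet, map_add, map_sub, map_mul, map_pow, map_one, map_smul,
    smul_eq_mul, hq]
  linear_combination (1 + ev (dx u) ^ 2) ^ 2 * h.H_sq_eq ev hq

lemma ev_dx_hopfSq : ev (dx (hopfSq H dx dy u)) = (h.normalJet ev hq).fx := by
  simp only [hopfSq, NormalJet.fx, normalJet, pow_two (_ : R), map_add, map_sub, map_mul, map_one,
    map_smul, Derivation.map_smul, smul_eq_mul, Derivation.leibniz, Derivation.map_one_eq_zero,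
    map_zero, h.comm, hq]
  linear_combination 4 * (1 + ev (dx u) ^ 2) * (ev (dx u) * ev (dx (dx u))) * h.H_sq_eq ev hq

lemma ev_dy_hopfSq : ev (dy (hopfSq H dx dy u)) = (h.normalJet ev hq).fy := by
  simp only [hopfSq, NormalJet.fy, normalJet, pow_two (_ : R), map_add, map_sub, map_mul, map_one,
    map_smul, Derivation.map_smul, smul_eq_mul, Derivation.leibniz, Derivation.map_one_eq_zero,
    map_zero, hq]
  linear_combination 4 * (1 + ev (dx u) ^ 2) * (ev (dx u) * ev (dy (dx u))) * h.H_sq_eq ev hq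

lemma ev_dx_dx_hopfSq : ev (dx (dx (hopfSq H dx dy u))) = (h.normalJet ev hq).fxx := by
  simp only [hopfSq, NormalJet.fxx, normalJet, pow_two (_ : R), map_add, map_sub, map_mul, map_one,
    map_smul, Derivation.map_smul, smul_eq_mul, Derivation.leibniz, Derivation.map_one_eq_zero,
    map_zero, h.comm, hq]
  linear_combination (8 * (ev (dx u) * ev (dx (dx u))) ^ 2
    + 4 * (1 + ev (dx u) ^ 2) * (ev (dx (dx u)) ^ 2 + ev (dx u) * ev (dx (dx (dx u)))
      + ev (dy (dx u)) ^ 2)) * h.H_sq_eq ev hq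

lemma ev_dy_dy_hopfSq : ev (dy (dy (hopfSq H dx dy u))) = (h.normalJet ev hq).fyy := by
  simp only [hopfSq, NormalJet.fyy, normalJet, pow_two (_ : R), map_add, map_sub, map_mul, map_one,
    map_smul, Derivation.map_smul, smul_eq_mul, Derivation.leibniz, Derivation.map_one_eq_zero,
    map_zero, hq]
  linear_combination (8 * (ev (dx u) * ev (dy (dx u))) ^ 2
    + 4 * (1 + ev (dx u) ^ 2) * (ev (dy (dx u)) ^ 2 + ev (dx u) * ev (dy (dy (dx u)))
      + ev (dy (dy u)) ^ 2)) * h.H_sq_eq ev hq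

lemma ev_lapOp (f : R) : ev (lapOp H dx dy u W f) = ev (dx (dx f))
    + (1 + ev (dx u) ^ 2) * ev (dy (dy f))
    - 2 * (H * ev ν) * (1 + ev (dx u) ^ 2) * ev (dx u) * ev (dx f) := by
  simp only [lapOp_apply, ellOp_apply, map_add, map_sub, map_mul, map_pow, map_one, map_smul,
    map_ofNat, smul_eq_mul, hq]
  linear_combination (-2 * ev (dx u) * ev (dx f)) * h.H_mul_ev_W ev hq

omit h in
lemma ev_ellOp_symbol (f : R) : ev ((ellOp dx dy u).symbol f f) =
    ev (dx f) ^ 2 + (1 + ev (dx u) ^ 2) * ev (dy f) ^ 2 := by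
  simp only [ellOp, DiffOp.symbol, map_add, map_neg, map_mul, map_pow, map_one, hq]
  ring

lemma ev_ν_sq_mul : ev ν ^ 2 * (1 + ev (dx u) ^ 2) = 1 := by
  linear_combination (ev ν * ev W + 1) * h.ev_W_mul_ev_ν ev
    - ev ν ^ 2 * (h.ev_W_sq ev).trans (by rw [hq]; ring : _ = 1 + ev (dx u) ^ 2)

lemma ev_lapOp_ν : ev (lapOp H dx dy u W ν) =
    -(2 * ev ν ^ 3 * ((H * ev ν) ^ 2 * (1 + ev (dx u) ^ 2) ^ 3 + ev (hopfSq H dx dy u))) := by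
  have hν := h.ev_ν_sq_mul ev hq
  have hJ := (h.normalJet ev hq).jacobi
  rw [h.ev_lapOp ev hq, h.ev_hopfSq ev hq]
  simp only [h.derivation_ν, Derivation.leibniz, Derivation.leibniz_pow, map_add, map_neg, map_mul,
    map_pow, map_ofNat, nsmul_eq_mul, smul_eq_mul, Nat.cast_ofNat, Nat.add_one_sub_one, h.comm, hq,
    normalJet] at hJ ⊢
  linear_combination ev ν ^ 5 * hJ + ev ν ^ 3 * (ev (dx (dx u)) ^ 2 + ev (dy (dx u)) ^ 2
    + ev (dx u) * ev (dx (dx (dx u))) + (1 + ev (dx u) ^ 2) * (ev (dy (dx u)) ^ 2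
      + ev (dy (dy u)) ^ 2 + ev (dx u) * ev (dy (dy (dx u))))
    - 2 * (H * ev ν) * (1 + ev (dx u) ^ 2) * ev (dx u) ^ 2 * ev (dx (dx u))
    - 2 * ((H * ev ν) ^ 2 * (1 + ev (dx u) ^ 2) ^ 3 + NormalJet.f _)) * hν

lemma lapOp_ν_nonpos_of_normal (hν : 0 < ev ν) : ev (lapOp H dx dy u W ν) ≤ 0 := by
  have hf := (h.normalJet ev hq).f_nonneg
  rw [← h.ev_hopfSq ev hq] at hf
  rw [h.ev_lapOp_ν ev hq]
  exact neg_nonpos.2 (by positivity)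

lemma hopfSq_nonneg_of_normal : 0 ≤ ev (hopfSq H dx dy u) :=
  (h.normalJet ev hq).f_nonneg.trans_eq (h.ev_hopfSq ev hq).symm

lemma simons_of_normal : 4 * ev ν ^ 2 * ev (hopfSq H dx dy u) ^ 3 ≤
    ev (hopfSq H dx dy u) * ev (lapOp H dx dy u W (hopfSq H dx dy u))
      - ev ((ellOp dx dy u).symbol (hopfSq H dx dy u) (hopfSq H dx dy u)) := by
  rw [h.ev_lapOp ev hq, ev_ellOp_symbol ev hq, h.ev_hopfSq ev hq, h.ev_dx_hopfSq ev hq,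
    h.ev_dy_hopfSq ev hq, h.ev_dx_dx_hopfSq ev hq, h.ev_dy_dy_hopfSq ev hq]
  have hν := h.ev_ν_sq_mul ev hq
  have hp : ev (dx u) = (h.normalJet ev hq).p := rfl
  have hk : H * ev ν = (h.normalJet ev hq).k := rfl
  generalize h.normalJet ev hq = J at *
  rw [hp] at hν ⊢
  rw [hk]
  have hnonneg : 0 ≤ ev ν ^ 2 * (12 * J.k ^ 2 * (1 + J.p ^ 2) ^ 3 * J.f ^ 2 + 4 * J.p ^ 2
      * ((1 + J.p ^ 2) * (2 * J.k * (1 + J.p ^ 2) - J.t) ^ 2 + J.s ^ 2) * J.f ^ 2) := by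
    positivity
  linear_combination hnonneg - ev ν ^ 2 * J.simons
    + (J.f * (J.fxx + (1 + J.p ^ 2) * J.fyy - 2 * J.k * (1 + J.p ^ 2) * J.p * J.fx)
      - (J.fx ^ 2 + (1 + J.p ^ 2) * J.fy ^ 2)) * hν

end NormalPoint

end IsCMCJet

end NormalJets

section Rotation

variable {R : Type*} [CommRing R] [Algebra ℝ R] {H : ℝ} {dx dy : Derivation ℝ R R} {u W ν : R}
  {c s : ℝ}

lemma algebraMap_sq_add_sq (hcs : c ^ 2 + s ^ 2 = 1) :
    algebraMap ℝ R c ^ 2 + algebraMap ℝ R s ^ 2 = 1 := by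
  rw [← map_pow, ← map_pow, ← map_add, hcs, map_one]

lemma ellOp_rotate (comm : ∀ f, dx (dy f) = dy (dx f)) (hcs : c ^ 2 + s ^ 2 = 1) (f : R) :
    ellOp (c • dx + s • dy) (-s • dx + c • dy) u f = ellOp dx dy u f := by
  have hcs' := algebraMap_sq_add_sq (R := R) hcs
  simp only [ellOp_apply, Derivation.add_apply, Derivation.smul_apply, map_add,
    Derivation.map_smul, comm]
  simp only [Algebra.smul_def, map_neg]
  linear_combination ((algebraMap ℝ R c ^ 2 + algebraMap ℝ R s ^ 2 + 1)
    * (dy u ^ 2 * dx (dx f) - 2 * (dx u * dy u * dy (dx f)) + dx u ^ 2 * dy (dy f))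
    + dx (dx f) + dy (dy f)) * hcs'

lemma ellOp_symbol_rotate (hcs : c ^ 2 + s ^ 2 = 1) (f : R) :
    (ellOp (c • dx + s • dy) (-s • dx + c • dy) u).symbol f f = (ellOp dx dy u).symbol f f := by
  have hcs' := algebraMap_sq_add_sq (R := R) hcs
  simp only [ellOp, DiffOp.symbol, Derivation.add_apply, Derivation.smul_apply, Algebra.smul_def,
    map_neg]
  linear_combination ((algebraMap ℝ R c ^ 2 + algebraMap ℝ R s ^ 2 + 1)
    * (dy u ^ 2 * dx f ^ 2 - 2 * (dx u * dy u * (dx f * dy f)) + dx u ^ 2 * dy f ^ 2)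
    + dx f ^ 2 + dy f ^ 2) * hcs'

lemma lapOp_rotate (comm : ∀ f, dx (dy f) = dy (dx f)) (hcs : c ^ 2 + s ^ 2 = 1) (f : R) :
    lapOp H (c • dx + s • dy) (-s • dx + c • dy) u W f = lapOp H dx dy u W f := by
  rw [lapOp_apply, lapOp_apply, ellOp_rotate comm hcs]
  congr 3
  simp only [Derivation.add_apply, Derivation.smul_apply, Algebra.smul_def, map_neg]
  linear_combination (dx u * dx f + dy u * dy f) * algebraMap_sq_add_sq (R := R) hcs

lemma one_add_sq_add_sq_rotate (hcs : c ^ 2 + s ^ 2 = 1) :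
    1 + (c • dx + s • dy) u ^ 2 + (-s • dx + c • dy) u ^ 2 = 1 + dx u ^ 2 + dy u ^ 2 := by
  simp only [Derivation.add_apply, Derivation.smul_apply, Algebra.smul_def, map_neg]
  linear_combination (dx u ^ 2 + dy u ^ 2) * algebraMap_sq_add_sq (R := R) hcs

lemma hopfSq_rotate (comm : ∀ f, dx (dy f) = dy (dx f)) (hcs : c ^ 2 + s ^ 2 = 1) :
    hopfSq H (c • dx + s • dy) (-s • dx + c • dy) u = hopfSq H dx dy u := by
  rw [hopfSq, hopfSq, one_add_sq_add_sq_rotate hcs]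
  congr 1
  simp only [Derivation.add_apply, Derivation.smul_apply, map_add, Derivation.map_smul, comm]
  simp only [Algebra.smul_def, map_neg]
  linear_combination (algebraMap ℝ R c ^ 2 + algebraMap ℝ R s ^ 2 + 1)
    * (dx (dx u) * dy (dy u) - dy (dx u) ^ 2) * algebraMap_sq_add_sq (R := R) hcs

lemma exists_rotation_eq_zero (p q : ℝ) : ∃ c s : ℝ, c ^ 2 + s ^ 2 = 1 ∧ -s * p + c * q = 0 := by
  obtain h0 | hpos := (by positivity : 0 ≤ p ^ 2 + q ^ 2).eq_or_lt
  · exact ⟨1, 0, by norm_num, by nlinarith⟩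
  · refine ⟨p / √(p ^ 2 + q ^ 2), q / √(p ^ 2 + q ^ 2), ?_, by ring⟩
    rw [div_pow, div_pow, Real.sq_sqrt hpos.le, ← add_div, div_self hpos.ne']

lemma exists_normal_rotation (ev : R →ₐ[ℝ] ℝ) (dx dy : Derivation ℝ R R) (u : R) :
    ∃ c s : ℝ, c ^ 2 + s ^ 2 = 1 ∧ ev ((-s • dx + c • dy) u) = 0 := by
  obtain ⟨c, s, hcs, hq⟩ := exists_rotation_eq_zero (ev (dx u)) (ev (dy u))
  exact ⟨c, s, hcs, by simpa using hq⟩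

namespace IsCMCJet

variable (h : IsCMCJet H dx dy u W ν)

include h

lemma rotate (hcs : c ^ 2 + s ^ 2 = 1) :
    IsCMCJet H (c • dx + s • dy) (-s • dx + c • dy) u W ν where
  comm f := by
    simp only [Derivation.add_apply, Derivation.smul_apply, map_add, Derivation.map_smul, h.comm]
    module
  sq := by rw [one_add_sq_add_sq_rotate hcs, h.sq]
  inv := h.inv
  eqn := by rw [ellOp_rotate h.comm hcs, h.eqn]

variable (ev : R →ₐ[ℝ] ℝ)

lemma lapOp_ν_nonpos (hν : 0 < ev ν) : ev (lapOp H dx dy u W ν) ≤ 0 := by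
  obtain ⟨c, s, hcs, hq⟩ := exists_normal_rotation ev dx dy u
  simpa only [lapOp_rotate h.comm hcs] using (h.rotate hcs).lapOp_ν_nonpos_of_normal ev hq hν

lemma hopfSq_nonneg : 0 ≤ ev (hopfSq H dx dy u) := by
  obtain ⟨c, s, hcs, hq⟩ := exists_normal_rotation ev dx dy u
  simpa only [hopfSq_rotate h.comm hcs] using (h.rotate hcs).hopfSq_nonneg_of_normal ev hq

lemma simons_inequality : 4 * ev ν ^ 2 * ev (hopfSq H dx dy u) ^ 3 ≤
    ev (hopfSq H dx dy u) * ev (lapOp H dx dy u W (hopfSq H dx dy u))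
      - ev ((ellOp dx dy u).symbol (hopfSq H dx dy u) (hopfSq H dx dy u)) := by
  obtain ⟨c, s, hcs, hq⟩ := exists_normal_rotation ev dx dy u
  simpa only [hopfSq_rotate h.comm hcs, lapOp_rotate h.comm hcs, ellOp_symbol_rotate hcs] using
    (h.rotate hcs).simons_of_normal ev hq

end IsCMCJet

end Rotation

section LocallyBounded

variable {E ι : Type*} [NormedAddCommGroup E] [NormedSpace ℝ E] {Ω : Opens E}

omit [NormedSpace ℝ E] in
lemma exists_closedBall_of_eventually_nhds {p : Ω → Prop} {x₀ : Ω} (h : ∀ᶠ x in nhds x₀, p x) :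
    ∃ ρ > 0, Metric.closedBall (x₀ : E) ρ ⊆ Ω ∧
      ∀ x : Ω, (x : E) ∈ Metric.closedBall (x₀ : E) ρ → p x := by
  obtain ⟨ρ₁, hρ₁, hΩ⟩ := Metric.nhds_basis_closedBall.mem_iff.1 (Ω.isOpen.mem_nhds x₀.2)
  obtain ⟨ρ₂, hρ₂, hp⟩ := Metric.nhds_basis_closedBall.mem_iff.1 h
  exact ⟨min ρ₁ ρ₂, lt_min hρ₁ hρ₂,
    (Metric.closedBall_subset_closedBall (min_le_left _ _)).trans hΩ,
    fun x hx => hp (Metric.closedBall_subset_closedBall (min_le_right _ _) hx)⟩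

/-- The algebra of the families that are locally bounded on `Ω`, uniformly in the index. -/
def LocBdd (ι : Type*) (Ω : Opens E) : Subalgebra ℝ (SmoothFam ι Ω) where
  carrier := {f | ∀ x₀ : Ω, ∃ C, ∀ᶠ x in nhds x₀, ∀ i, |evAt i x f| ≤ C}
  mul_mem' {f g} hf hg x₀ := by
    obtain ⟨C, hC⟩ := hf x₀
    obtain ⟨D, hD⟩ := hg x₀
    refine ⟨C * D, ?_⟩
    filter_upwards [hC, hD] with x hCx hDx i
    rw [map_mul, abs_mul]
    exact mul_le_mul (hCx i) (hDx i) (abs_nonneg _) ((abs_nonneg _).trans (hCx i))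
  add_mem' {f g} hf hg x₀ := by
    obtain ⟨C, hC⟩ := hf x₀
    obtain ⟨D, hD⟩ := hg x₀
    refine ⟨C + D, ?_⟩
    filter_upwards [hC, hD] with x hCx hDx i
    rw [map_add]
    exact (abs_add_le _ _).trans (add_le_add (hCx i) (hDx i))
  algebraMap_mem' c _ := ⟨|c|, .of_forall fun x i => by
    rw [AlgHom.commutes, Algebra.algebraMap_self, RingHom.id_apply]⟩

namespace LocBdd

lemma exists_pos {f : SmoothFam ι Ω} (hf : f ∈ LocBdd ι Ω) (x₀ : Ω) :
    ∃ C > 0, ∀ᶠ x in nhds x₀, ∀ i, |evAt i x f| ≤ C := by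
  obtain ⟨C, hC⟩ := hf x₀
  exact ⟨|C| + 1, by positivity, hC.mono fun x hx i => (hx i).trans (by linarith [le_abs_self C])⟩

lemma exists_bound_of_isCompact {f : SmoothFam ι Ω} (hf : f ∈ LocBdd ι Ω) {K : Set E}
    (hK : IsCompact K) (hKΩ : K ⊆ Ω) : ∃ C > 0, ∀ i (x : Ω), (x : E) ∈ K → |evAt i x f| ≤ C := by
  have hbound : ∃ C, ∀ x ∈ ((↑) ⁻¹' K : Set Ω), ∀ i, |evAt i x f| ≤ C := by
    refine (Topology.IsInducing.subtypeVal.isCompact_preimage' hK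
      (by simpa using hKΩ)).induction_on (p := fun s => ∃ C, ∀ x ∈ s, ∀ i, |evAt i x f| ≤ C)
      ⟨0, by simp⟩ (fun s t hst ⟨C, hC⟩ => ⟨C, fun x hx => hC x (hst hx)⟩) ?_ ?_
    · rintro s t ⟨C, hC⟩ ⟨D, hD⟩
      exact ⟨max C D, fun x hx i => hx.elim (fun hs => (hC x hs i).trans (le_max_left _ _))
        fun ht => (hD x ht i).trans (le_max_right _ _)⟩
    · intro x _
      obtain ⟨C, hC⟩ := hf x
      exact ⟨_, mem_nhdsWithin_of_mem_nhds hC, C, fun y hy => hy⟩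
  obtain ⟨C, hC⟩ := hbound
  exact ⟨|C| + 1, by positivity, fun i x hx => (hC x hx i).trans (by linarith [le_abs_self C])⟩

lemma exists_bound_of_isCompact_of_finite {s : Set (SmoothFam ι Ω)} (hs : s.Finite)
    (hsb : s ⊆ LocBdd ι Ω) {K : Set E} (hK : IsCompact K) (hKΩ : K ⊆ Ω) :
    ∃ C, ∀ f ∈ s, ∀ i (x : Ω), (x : E) ∈ K → |evAt i x f| ≤ C := by
  refine (hs.eventually_all.2 fun f hf => ?_ : ∀ᶠ C in atTop, ∀ f ∈ s, _).exists
  obtain ⟨C, -, hC⟩ := exists_bound_of_isCompact (hsb hf) hK hKΩ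
  filter_upwards [eventually_ge_atTop C] with D hD i x hx using (hC i x hx).trans hD

lemma of_sq_le {f g : SmoothFam ι Ω} (hg : g ∈ LocBdd ι Ω)
    (hfg : ∀ i x, evAt i x f ^ 2 ≤ evAt i x g) : f ∈ LocBdd ι Ω := fun x₀ => by
  obtain ⟨C, -, hC⟩ := exists_pos hg x₀
  refine ⟨√C, hC.mono fun x hx i => Real.abs_le_sqrt ?_⟩
  exact (hfg i x).trans ((le_abs_self _).trans (hx i))

end LocBdd

namespace SmoothFam

/-- The family all of whose members are the smooth function `F`. -/
def const (F : E → ℝ) (hF : ContDiff ℝ (⊤ : ℕ∞) F) : SmoothFam ι Ω :=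
  of (fun _ => F) fun _ => hF.contDiffOn

variable {F : E → ℝ} {hF : ContDiff ℝ (⊤ : ℕ∞) F}

lemma dirDer_const (v : E) : dirDer v (const F hF : SmoothFam ι Ω) =
    const (fun x => fderiv ℝ F x v)
      ((hF.fderiv_right (m := (⊤ : ℕ∞)) (by norm_cast)).clm_apply contDiff_const) := by
  ext i x
  have heq : (const F hF : SmoothFam ι Ω).extend i =ᶠ[nhds ↑x] F :=
    (extend_of _ _ i).eventuallyEq_of_mem (Ω.isOpen.mem_nhds x.2)
  rw [evAt_dirDer, heq.fderiv_eq]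
  rfl

lemma const_mem_locBdd : (const F hF : SmoothFam ι Ω) ∈ LocBdd ι Ω := fun x₀ => by
  have hcont : Continuous fun x : Ω => |F x| := (hF.continuous.comp continuous_subtype_val).abs
  exact ⟨|F x₀| + 1, (hcont.continuousAt.eventually_lt_const (lt_add_one _)).mono
    fun x hx _ => hx.le⟩

end SmoothFam

lemma exists_isMaxOn_ball [FiniteDimensional ℝ E] {x₀ : E} {ρ : ℝ}
    (hΩ : Metric.closedBall x₀ ρ ⊆ Ω) {g : SmoothFam ι Ω} {i : ι}
    (hsphere : ∀ x : Ω, (x : E) ∈ Metric.sphere x₀ ρ → evAt i x g ≤ 0) {y : Ω}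
    (hy : (y : E) ∈ Metric.closedBall x₀ ρ) (hgy : 0 < evAt i y g) :
    ∃ x : Ω, dist (x : E) x₀ < ρ ∧ IsMaxOn (g.extend i) (Metric.closedBall x₀ ρ) x := by
  have := FiniteDimensional.proper ℝ E
  obtain ⟨x, hx, hmax⟩ := (isCompact_closedBall x₀ ρ).exists_isMaxOn ⟨y, hy⟩
    ((g.contDiffOn i).continuousOn.mono hΩ)
  refine ⟨⟨x, hΩ hx⟩, (lt_or_eq_of_le hx).resolve_right fun hxs => ?_, hmax⟩
  have hyx : evAt i y g ≤ evAt i ⟨x, hΩ hx⟩ g := by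
    simpa only [extend_apply g i, extend_apply g i ⟨x, hΩ hx⟩] using isMaxOn_iff.1 hmax y hy
  exact (hgy.trans_le hyx).not_ge (hsphere ⟨x, hΩ hx⟩ hxs)

end LocallyBounded

section KellerOsserman

namespace DiffOp

variable {R : Type*} [CommRing R] [Algebra ℝ R] {dx dy : Derivation ℝ R R}

/-- Weak ellipticity, with positive leading coefficient, of an operator whose coefficients are
evaluated along an algebra homomorphism, such as the evaluation at a point. -/
def IsEllipticAt (L : DiffOp dx dy) (ev : R →ₐ[ℝ] ℝ) : Prop :=
  0 < ev L.xx ∧ ev L.xy ^ 2 ≤ ev L.xx * ev L.yy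

/-- Uniform ellipticity, with the constant normalised to `1`, of an operator whose coefficients are
evaluated along an algebra homomorphism. -/
def IsUniformlyEllipticAt (L : DiffOp dx dy) (ev : R →ₐ[ℝ] ℝ) : Prop :=
  ∀ a b : ℝ, a ^ 2 + b ^ 2 ≤ ev L.xx * a ^ 2 + 2 * ev L.xy * (a * b) + ev L.yy * b ^ 2

/-- The coefficients of the operator belong to the subalgebra `S`. -/
structure CoeffsMem (L : DiffOp dx dy) (S : Subalgebra ℝ R) : Prop where
  xx : L.xx ∈ S
  xy : L.xy ∈ S
  yy : L.yy ∈ S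
  x : L.x ∈ S
  y : L.y ∈ S

variable {L : DiffOp dx dy} {S : Subalgebra ℝ R}

lemma IsUniformlyEllipticAt.isEllipticAt {ev : R →ₐ[ℝ] ℝ} (hL : L.IsUniformlyEllipticAt ev) :
    L.IsEllipticAt ev := by
  have hxx : 0 < ev L.xx := by linarith [hL 1 0]
  refine ⟨hxx, le_of_mul_le_mul_left ?_ hxx⟩
  linarith [hL (-ev L.xy) (ev L.xx), sq_nonneg (ev L.xy), sq_nonneg (ev L.xx)]

lemma IsUniformlyEllipticAt.sq_add_sq_le_symbol {ev : R →ₐ[ℝ] ℝ}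
    (hL : L.IsUniformlyEllipticAt ev) (f : R) :
    ev (dx f) ^ 2 + ev (dy f) ^ 2 ≤ ev (L.symbol f f) := by
  refine (hL (ev (dx f)) (ev (dy f))).trans_eq ?_
  simp only [symbol, map_add, map_mul]
  ring

lemma CoeffsMem.apply_mem (hL : L.CoeffsMem S) {f : R} (hx : dx f ∈ S) (hy : dy f ∈ S)
    (hxx : dx (dx f) ∈ S) (hyx : dy (dx f) ∈ S) (hyy : dy (dy f) ∈ S) : L f ∈ S := by
  obtain ⟨h₁, h₂, h₃, h₄, h₅⟩ := hL
  rw [L.apply_def]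
  aesop

lemma CoeffsMem.symbol_mem (hL : L.CoeffsMem S) {f g : R} (hfx : dx f ∈ S) (hfy : dy f ∈ S)
    (hgx : dx g ∈ S) (hgy : dy g ∈ S) : L.symbol f g ∈ S := by
  obtain ⟨h₁, h₂, h₃, -, -⟩ := hL
  rw [symbol]
  aesop

end DiffOp

variable {ι : Type*} {Ω : Opens (ℝ × ℝ)} {L : DiffOp (dX (ι := ι) (Ω := Ω)) dY} {i : ι} {x : Ω}
  {f η : SmoothFam ι Ω}

namespace DiffOp.IsEllipticAt

lemma apply_nonpos_of_isLocalMax (hL : L.IsEllipticAt (evAt i x))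
    (hmax : IsLocalMax (f.extend i) x) : evAt i x (L f) ≤ 0 := by
  have hell := elliptic_nonpos_of_isLocalMax hmax hL.1 hL.2
  have hx : evAt i x (dX f) = 0 := evAt_dirDer_eq_zero_of_isLocalMax hmax (1, 0)
  have hy : evAt i x (dY f) = 0 := evAt_dirDer_eq_zero_of_isLocalMax hmax (0, 1)
  simpa [L.apply_def, hx, hy, map_ofNat] using hell

lemma sq_mul_apply_le_of_isLocalMax (hL : L.IsEllipticAt (evAt i x))
    (hη : evAt i x η ≠ 0) (hmax : IsLocalMax ((η ^ 2 * f).extend i) x) :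
    evAt i x η ^ 2 * evAt i x (L f) ≤
      evAt i x f * evAt i x (6 * L.symbol η η - 2 * (η * L η)) := by
  have hgrad (d : Derivation ℝ (SmoothFam ι Ω) (SmoothFam ι Ω))
      (hd : evAt i x (d (η ^ 2 * f)) = 0) :
      evAt i x η * evAt i x (d f) = -2 * (evAt i x f * evAt i x (d η)) := by
    simp only [pow_two, Derivation.leibniz, map_add, map_mul, smul_eq_mul] at hd
    refine mul_left_cancel₀ hη ?_
    linear_combination hd
  have hx := hgrad dX (evAt_dirDer_eq_zero_of_isLocalMax hmax (1, 0))
  have hy := hgrad dY (evAt_dirDer_eq_zero_of_isLocalMax hmax (0, 1))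
  have hmul : L (η ^ 2 * f) = η ^ 2 * L f + f * (2 * (η * L η) + 2 * L.symbol η η)
      + 4 * (η * L.symbol η f) := by
    rw [L.apply_mul, pow_two, L.apply_mul]
    simp only [DiffOp.symbol, Derivation.leibniz, smul_eq_mul]
    ring
  have hsymbol : evAt i x η * evAt i x (L.symbol η f) =
      -2 * (evAt i x f * evAt i x (L.symbol η η)) := by
    simp only [DiffOp.symbol, map_add, map_mul]
    linear_combination (evAt i x L.xx * evAt i x (dX η) + evAt i x L.xy * evAt i x (dY η)) * hx
      + (evAt i x L.xy * evAt i x (dX η) + evAt i x L.yy * evAt i x (dY η)) * hy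
  have hle := hL.apply_nonpos_of_isLocalMax hmax
  simp only [hmul, map_add, map_mul, map_pow, map_ofNat] at hle
  simp only [map_sub, map_mul, map_ofNat]
  linarith

lemma mul_sq_le_of_isLocalMax (hL : L.IsEllipticAt (evAt i x)) {κ B C : ℝ} (hC : 0 ≤ C)
    (hη : 0 < evAt i x η) (hη1 : evAt i x η ≤ 1) (hf : 0 < evAt i x f)
    (hmax : IsLocalMax ((η ^ 2 * f).extend i) x)
    (hB : evAt i x (6 * L.symbol η η - 2 * (η * L η)) ≤ B)
    (hLf : κ * evAt i x f ^ 2 - C ≤ evAt i x (L f)) :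
    κ * (evAt i x η ^ 2 * evAt i x f) ^ 2 ≤ B * (evAt i x η ^ 2 * evAt i x f) + C := by
  have hη4 : evAt i x η ^ 4 ≤ 1 := pow_le_one₀ hη.le hη1
  have hle : evAt i x η ^ 2 * (κ * evAt i x f ^ 2 - C) ≤ evAt i x f * B :=
    (mul_le_mul_of_nonneg_left hLf (by positivity)).trans
      ((hL.sq_mul_apply_le_of_isLocalMax hη.ne' hmax).trans (by gcongr))
  calc κ * (evAt i x η ^ 2 * evAt i x f) ^ 2
      = evAt i x η ^ 2 * (evAt i x η ^ 2 * (κ * evAt i x f ^ 2 - C)) + evAt i x η ^ 4 * C := by ring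
    _ ≤ evAt i x η ^ 2 * (evAt i x f * B) + 1 * C := by gcongr
    _ = B * (evAt i x η ^ 2 * evAt i x f) + C := by ring

end DiffOp.IsEllipticAt

lemma le_of_mul_sq_le {κ m B C : ℝ} (hκ : 0 < κ) (hB : 0 ≤ B) (hC : 0 ≤ C)
    (h : κ * m ^ 2 ≤ B * m + C) : m ≤ 1 + (B + C) / κ := by
  by_contra! hm
  have hm1 : 1 ≤ m := le_trans (le_add_of_nonneg_right (by positivity)) hm.le
  have hκm : B + C < κ * m := by
    rw [← div_lt_iff₀' hκ]
    linarith
  nlinarith [mul_lt_mul_of_pos_right hκm (zero_lt_one.trans_le hm1)]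

lemma DiffOp.CoeffsMem.cutoff_mem_locBdd (hL : L.CoeffsMem (LocBdd ι Ω)) {F : ℝ × ℝ → ℝ}
    (hF : ContDiff ℝ (⊤ : ℕ∞) F) :
    6 * L.symbol (const F hF) (const F hF) - 2 * (const F hF * L (const F hF)) ∈ LocBdd ι Ω := by
  have hder (v w : ℝ × ℝ) : dirDer v (const F hF) ∈ LocBdd ι Ω ∧
      dirDer v (dirDer w (const F hF)) ∈ LocBdd ι Ω := by
    simp only [dirDer_const]
    exact ⟨const_mem_locBdd, const_mem_locBdd⟩
  have hx : dX (const F hF) ∈ LocBdd ι Ω := (hder (1, 0) 0).1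
  have hy : dY (const F hF) ∈ LocBdd ι Ω := (hder (0, 1) 0).1
  have happly : L (const F hF) ∈ LocBdd ι Ω :=
    hL.apply_mem hx hy (hder (1, 0) (1, 0)).2 (hder (0, 1) (1, 0)).2 (hder (0, 1) (0, 1)).2
  exact sub_mem (mul_mem (ofNat_mem _ 6) (hL.symbol_mem hx hy hx hy))
    (mul_mem (ofNat_mem _ 2) (mul_mem const_mem_locBdd happly))

/-- The constant does not involve the values of `f`. -/
theorem keller_osserman (hell : ∀ i x, L.IsEllipticAt (evAt i x))
    (hL : L.CoeffsMem (LocBdd ι Ω)) {x₀ : Ω} {κ C : ℝ} (hκ : 0 < κ) (hC : 0 ≤ C)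
    (hf : ∀ᶠ x in nhds x₀, ∀ i, 0 < evAt i x f →
      κ * evAt i x f ^ 2 - C ≤ evAt i x (L f)) :
    ∃ D, ∀ᶠ x in nhds x₀, ∀ i, evAt i x f ≤ D := by
  obtain ⟨ρ, hρ, hρΩ, hf⟩ := exists_closedBall_of_eventually_nhds hf
  let F : ContDiffBump (x₀ : ℝ × ℝ) := ⟨ρ / 2, ρ, by positivity, by linarith⟩
  obtain ⟨B, hB, hbound⟩ := LocBdd.exists_bound_of_isCompact (hL.cutoff_mem_locBdd F.contDiff)
    (isCompact_closedBall _ ρ) hρΩ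
  set η : SmoothFam ι Ω := const F F.contDiff
  have hη (i : ι) (x : Ω) : evAt i x η = F x := rfl
  refine ⟨1 + (B + C) / κ, ?_⟩
  filter_upwards [continuous_subtype_val.continuousAt.eventually
    (Metric.closedBall_mem_nhds (x₀ : ℝ × ℝ) F.rIn_pos)] with y hy i
  obtain hy0 | hy0 := le_or_gt (evAt i y f) 0
  · exact hy0.trans (by positivity)
  have hyη : evAt i y (η ^ 2 * f) = evAt i y f := by
    rw [map_mul, map_pow, hη, F.one_of_mem_closedBall hy, one_pow, one_mul]
  have hyρ : (y : ℝ × ℝ) ∈ Metric.closedBall (x₀ : ℝ × ℝ) ρ :=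
    Metric.closedBall_subset_closedBall F.rIn_lt_rOut.le hy
  obtain ⟨x, hx, hmax⟩ := exists_isMaxOn_ball hρΩ (g := η ^ 2 * f) (i := i) (fun z hz => by
    rw [map_mul, map_pow, hη, F.zero_of_le_dist hz.ge]; simp) hyρ (hyη ▸ hy0)
  have hyx : evAt i y f ≤ evAt i x (η ^ 2 * f) := by
    simpa only [extend_apply, hyη] using isMaxOn_iff.1 hmax y hyρ
  have hηx : 0 < evAt i x η := F.pos_of_mem_ball hx
  have hloc := hmax.isLocalMax (Metric.closedBall_mem_nhds_of_mem hx)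
  rw [map_mul, map_pow] at hyx
  have hfx : 0 < evAt i x f := pos_of_mul_pos_right (hy0.trans_le hyx) (by positivity)
  exact hyx.trans (le_of_mul_sq_le hκ hB.le hC ((hell i x).mul_sq_le_of_isLocalMax hC hηx F.le_one
    hfx hloc ((le_abs_self _).trans (hbound i x hx.le)) (hf x hx.le i hfx)))

end KellerOsserman

section GradientEstimate

section Pointwise

variable {R : Type*} [CommRing R] [Algebra ℝ R] {H : ℝ} {dx dy : Derivation ℝ R R} {u W ν : R}
  (ev : R →ₐ[ℝ] ℝ)

lemma isUniformlyEllipticAt_ellOp : (ellOp dx dy u).IsUniformlyEllipticAt ev := fun a b => by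
  simp only [ellOp, map_add, map_one, map_pow, map_neg, map_mul]
  linarith [sq_nonneg (ev (dy u) * a - ev (dx u) * b)]

lemma isEllipticAt_lapOp : (lapOp H dx dy u W).IsEllipticAt ev :=
  (isUniformlyEllipticAt_ellOp ev).isEllipticAt

namespace IsCMCJet

variable (h : IsCMCJet H dx dy u W ν)

include h

lemma abs_ev_dx_le : |ev (dx u)| ≤ |ev W| :=
  sq_le_sq.1 (by linarith [h.ev_W_sq ev, sq_nonneg (ev (dy u))])

lemma abs_ev_dy_le : |ev (dy u)| ≤ |ev W| :=
  sq_le_sq.1 (by linarith [h.ev_W_sq ev, sq_nonneg (ev (dx u))])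

lemma abs_ev_ellOp_le {f : R} {D : ℝ} (hxx : |ev (dx (dx f))| ≤ D)
    (hyx : |ev (dy (dx f))| ≤ D) (hyy : |ev (dy (dy f))| ≤ D) :
    |ev (ellOp dx dy u f)| ≤ 4 * D * ev W ^ 2 := by
  have hp := h.abs_ev_dx_le ev
  have hq := h.abs_ev_dy_le ev
  have hp1 : |1 + ev (dx u) ^ 2| ≤ ev W ^ 2 := by
    rw [abs_of_pos (by positivity)]
    linarith [h.ev_W_sq ev, sq_nonneg (ev (dy u))]
  have hq1 : |1 + ev (dy u) ^ 2| ≤ ev W ^ 2 := by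
    rw [abs_of_pos (by positivity)]
    linarith [h.ev_W_sq ev, sq_nonneg (ev (dx u))]
  simp only [ellOp_apply, map_add, map_sub, map_mul, map_one, map_pow, map_ofNat]
  calc _ ≤ |1 + ev (dy u) ^ 2| * |ev (dx (dx f))|
        + 2 * (|ev (dx u)| * |ev (dy u)|) * |ev (dy (dx f))|
        + |1 + ev (dx u) ^ 2| * |ev (dy (dy f))| := by
        refine (abs_add_le _ _).trans (add_le_add ((abs_sub _ _).trans ?_) (abs_mul _ _).le)
        simp only [abs_mul, abs_two, le_refl]
    _ ≤ ev W ^ 2 * D + 2 * (|ev W| * |ev W|) * D + ev W ^ 2 * D := by gcongr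
    _ = 4 * D * ev W ^ 2 := by rw [abs_mul_abs_self]; ring

lemma abs_ev_lapOp_le {f : R} {D : ℝ} (hx : |ev (dx f)| ≤ D) (hy : |ev (dy f)| ≤ D)
    (hxx : |ev (dx (dx f))| ≤ D) (hyx : |ev (dy (dx f))| ≤ D) (hyy : |ev (dy (dy f))| ≤ D) :
    |ev (lapOp H dx dy u W f)| ≤ 4 * (1 + |H|) * D * ev W ^ 2 := by
  have hp := h.abs_ev_dx_le ev
  have hq := h.abs_ev_dy_le ev
  have hlower : |2 * H * (ev W * (ev (dx u) * ev (dx f) + ev (dy u) * ev (dy f)))| ≤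
      4 * |H| * D * ev W ^ 2 :=
    calc _ ≤ 2 * |H| * (|ev W| * (|ev (dx u)| * |ev (dx f)| + |ev (dy u)| * |ev (dy f)|)) := by
          rw [abs_mul, abs_mul, abs_mul, abs_two]
          gcongr
          exact (abs_add_le _ _).trans (by rw [abs_mul, abs_mul])
      _ ≤ 2 * |H| * (|ev W| * (|ev W| * D + |ev W| * D)) := by gcongr
      _ = 4 * |H| * D * ev W ^ 2 := by rw [← sq_abs (ev W)]; ring
  rw [lapOp_apply, map_sub, map_smul, smul_eq_mul]
  simp only [map_mul, map_add]
  calc _ ≤ 4 * D * ev W ^ 2 + 4 * |H| * D * ev W ^ 2 :=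
        (abs_sub _ _).trans (add_le_add (h.abs_ev_ellOp_le ev hxx hyx hyy) hlower)
    _ = 4 * (1 + |H|) * D * ev W ^ 2 := by ring

lemma le_ev_lapOp_add_smul {f : R} {c D M : ℝ} (hx : |ev (dx f)| ≤ D) (hy : |ev (dy f)| ≤ D)
    (hxx : |ev (dx (dx f))| ≤ D) (hyx : |ev (dy (dx f))| ≤ D) (hyy : |ev (dy (dy f))| ≤ D)
    (hc : 0 ≤ c) (hW : 1 ≤ ev W) :
    -((4 * (1 + |H|) * D + 2 * c * |H|) * ev W ^ 2) ≤
      ev (lapOp H dx dy u W (f + c • (u - algebraMap ℝ R M))) := by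
  have hconst : lapOp H dx dy u W (algebraMap ℝ R M) = 0 := by simp [DiffOp.apply_def]
  have hlin : c * |H| * ev W ≤ c * |H| * ev W ^ 2 := by
    gcongr
    exact le_self_pow₀ hW two_ne_zero
  have hH : -(c * |H| * ev W) ≤ c * H * ev W := by
    rw [← neg_mul, ← mul_neg]
    gcongr
    exact neg_abs_le H
  rw [map_add, map_smul, map_sub, hconst, sub_zero, h.lapOp_self, map_add, map_smul, map_smul,
    smul_eq_mul, smul_eq_mul]
  linarith [neg_le_of_abs_le (h.abs_ev_lapOp_le ev hx hy hxx hyx hyy)]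

lemma le_ev_ellOp_symbol_add_smul {f : R} {c D M : ℝ} (hx : |ev (dx f)| ≤ D)
    (hy : |ev (dy f)| ≤ D) :
    c ^ 2 * (ev W ^ 2 - 1) / 2 - 2 * D ^ 2 ≤ ev ((ellOp dx dy u).symbol
      (f + c • (u - algebraMap ℝ R M)) (f + c • (u - algebraMap ℝ R M))) := by
  have hle := (isUniformlyEllipticAt_ellOp (dx := dx) (dy := dy) (u := u) ev).sq_add_sq_le_symbol
    (f + c • (u - algebraMap ℝ R M))
  simp only [map_add, Derivation.map_smul, map_sub, Derivation.map_algebraMap, sub_zero, map_smul,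
    smul_eq_mul] at hle
  refine le_trans ?_ hle
  have hx2 := sq_le_sq' (neg_le_of_abs_le hx) (le_of_abs_le hx)
  have hy2 := sq_le_sq' (neg_le_of_abs_le hy) (le_of_abs_le hy)
  rw [h.ev_W_sq ev]
  linarith [sq_nonneg (2 * ev (dx f) + c * ev (dx u)), sq_nonneg (2 * ev (dy f) + c * ev (dy u))]

-- for `K` large, the gradient term in `hmax` dominates the other one unless `W` is bounded
lemma ev_W_sq_le_of_gradient_term {f : R} {c D M K : ℝ} (hx : |ev (dx f)| ≤ D)
    (hy : |ev (dy f)| ≤ D) (hxx : |ev (dx (dx f))| ≤ D) (hyx : |ev (dy (dx f))| ≤ D)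
    (hyy : |ev (dy (dy f))| ≤ D) (hc : 0 < c) (hW : 1 ≤ ev W) {g : R}
    (hg : g = f + c • (u - algebraMap ℝ R M)) (hg0 : 0 ≤ ev g) (hg1 : ev g ≤ 1) (hK : 0 < K)
    (hcK : 4 * (4 * (1 + |H|) * D + 2 * c * |H|) ≤ c ^ 2 * K)
    (hmax : ev g * ev (lapOp H dx dy u W g) + K * ev ((ellOp dx dy u).symbol g g) ≤ 0) :
    ev W ^ 2 ≤ 2 + 8 * D ^ 2 / c ^ 2 := by
  have hD : 0 ≤ D := (abs_nonneg _).trans hx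
  set Q : ℝ := 4 * (1 + |H|) * D + 2 * c * |H|
  have : 0 ≤ Q := by positivity
  have hL : -(Q * ev W ^ 2) ≤ ev g * ev (lapOp H dx dy u W g) := by
    have hle := hg ▸ h.le_ev_lapOp_add_smul ev (M := M) hx hy hxx hyx hyy hc.le hW
    calc -(Q * ev W ^ 2) ≤ ev g * -(Q * ev W ^ 2) := by
          rw [mul_neg, neg_le_neg_iff]
          exact mul_le_of_le_one_left (by positivity) hg1
      _ ≤ _ := mul_le_mul_of_nonneg_left hle hg0
  have hσ := mul_le_mul_of_nonneg_left
    (hg ▸ h.le_ev_ellOp_symbol_add_smul ev (c := c) (M := M) hx hy) hK.le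
  have hQW : 4 * Q * ev W ^ 2 ≤ c ^ 2 * K * ev W ^ 2 := by gcongr
  have hKle : K * (c ^ 2 * ev W ^ 2) ≤ K * (2 * c ^ 2 + 8 * D ^ 2) := by linarith
  have hcW := le_of_mul_le_mul_left hKle hK
  have hdiv : 2 + 8 * D ^ 2 / c ^ 2 = (2 * c ^ 2 + 8 * D ^ 2) / c ^ 2 := by field_simp
  rwa [hdiv, le_div_iff₀' (by positivity)]

end IsCMCJet

end Pointwise

section MaximumPrinciple

variable {ι : Type*} {Ω : Opens (ℝ × ℝ)} {H : ℝ} {u W ν : SmoothFam ι Ω}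

namespace IsCMCJet

variable (h : IsCMCJet H dX dY u W ν)

include h

lemma one_le_evAt_W (hW : ∀ i x, 0 < evAt i x W) (i : ι) (x : Ω) : 1 ≤ evAt i x W := by
  rw [← one_le_sq_iff₀ (hW i x).le, h.ev_W_sq]
  linarith [sq_nonneg (evAt i x (dX u)), sq_nonneg (evAt i x (dY u))]

lemma evAt_ν_pos (hW : ∀ i x, 0 < evAt i x W) (i : ι) (x : Ω) : 0 < evAt i x ν :=
  pos_of_mul_pos_right (h.ev_W_mul_ev_ν (evAt i x) ▸ one_pos) (hW i x).le

/-- The maximum of `gᵏ⁺² / ν` is turned into a local maximum of the difference `gᵏ⁺² - m ν`, whose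
second term is subharmonic on the graph because `ν` is superharmonic. -/
lemma gradient_term_nonpos_of_isMaxOn (hW : ∀ i x, 0 < evAt i x W) {g : SmoothFam ι Ω} {k : ℕ}
    {i : ι} {x : Ω} {s : Set (ℝ × ℝ)} (hs : s ∈ nhds (x : ℝ × ℝ)) (hsΩ : s ⊆ Ω)
    (hmax : IsMaxOn ((g ^ (k + 2) * W).extend i) s x) (hg : 0 < evAt i x g) :
    evAt i x g * evAt i x (lapOp H dX dY u W g)
      + (k + 1) * evAt i x ((ellOp dX dY u).symbol g g) ≤ 0 := by
  set m : ℝ := evAt i x (g ^ (k + 2) * W) with hm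
  have hm0 : 0 ≤ m := by
    rw [hm, map_mul, map_pow]
    exact mul_nonneg (pow_pos hg _).le (hW i x).le
  have hdiff (y : Ω) : evAt i y (g ^ (k + 2) - m • ν) =
      evAt i y ν * (evAt i y (g ^ (k + 2) * W) - m) := by
    simp only [map_sub, map_mul, map_smul, smul_eq_mul]
    linear_combination -evAt i y (g ^ (k + 2)) * h.ev_W_mul_ev_ν (evAt i y)
  have hloc : IsMaxOn ((g ^ (k + 2) - m • ν).extend i) s x := by
    refine isMaxOn_iff.2 fun y hy => ?_
    have hle := isMaxOn_iff.1 hmax y hy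
    rw [extend_apply _ i ⟨y, hsΩ hy⟩, extend_apply] at hle ⊢
    rw [hdiff, hdiff x, ← hm, sub_self, mul_zero]
    exact mul_nonpos_of_nonneg_of_nonpos (h.evAt_ν_pos hW i _).le (sub_nonpos.2 hle)
  have hle := (isEllipticAt_lapOp (H := H) (u := u) (W := W) _).apply_nonpos_of_isLocalMax
    (hloc.isLocalMax hs)
  have hν := mul_nonpos_of_nonneg_of_nonpos hm0 (h.lapOp_ν_nonpos _ (h.evAt_ν_pos hW i x))
  rw [map_sub, map_smul, map_sub, map_smul, smul_eq_mul, DiffOp.apply_pow_add_two, lapOp_symbol]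
    at hle
  simp only [map_mul, map_add, map_pow, map_natCast, map_ofNat, map_one] at hle
  have hpos : 0 < ((k : ℝ) + 2) * evAt i x g ^ k := by positivity
  exact nonpos_of_mul_nonpos_right (by linarith) hpos

lemma pow_mul_evAt_W_le (hW : ∀ i x, 0 < evAt i x W) {x₀ : ℝ × ℝ} {ρ : ℝ}
    (hρΩ : Metric.closedBall x₀ ρ ⊆ Ω) {η g : SmoothFam ι Ω} {c D M : ℝ} {k : ℕ} {i : ι}
    (hg : g = η + c • (u - algebraMap ℝ _ M)) (hc : 0 < c)
    (hD : ∀ f ∈ ({dX η, dY η, dX (dX η), dY (dX η), dY (dY η)} : Set (SmoothFam ι Ω)),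
      ∀ x : Ω, (x : ℝ × ℝ) ∈ Metric.closedBall x₀ ρ → |evAt i x f| ≤ D)
    (hg1 : ∀ x : Ω, (x : ℝ × ℝ) ∈ Metric.closedBall x₀ ρ → evAt i x g ≤ 1)
    (hsphere : ∀ x : Ω, (x : ℝ × ℝ) ∈ Metric.sphere x₀ ρ → evAt i x g ≤ 0) (hk : Odd k)
    (hck : 4 * (4 * (1 + |H|) * D + 2 * c * |H|) ≤ c ^ 2 * (k + 1)) {y : Ω}
    (hy : (y : ℝ × ℝ) ∈ Metric.closedBall x₀ ρ) (hgy : 0 < evAt i y g) :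
    evAt i y g ^ (k + 2) * evAt i y W ≤ 2 + 8 * D ^ 2 / c ^ 2 := by
  have hk2 : Odd (k + 2) := hk.add_even even_two
  have hval (x : Ω) : evAt i x (g ^ (k + 2) * W) = evAt i x g ^ (k + 2) * evAt i x W := by
    rw [map_mul, map_pow]
  obtain ⟨x, hx, hmax⟩ := exists_isMaxOn_ball hρΩ (g := g ^ (k + 2) * W) (i := i) (fun z hz =>
    (hval z).trans_le (mul_nonpos_of_nonpos_of_nonneg (hk2.pow_nonpos (hsphere z hz)) (hW i z).le))
    hy (hval y ▸ mul_pos (pow_pos hgy _) (hW i y))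
  have hyx : evAt i y g ^ (k + 2) * evAt i y W ≤ evAt i x g ^ (k + 2) * evAt i x W := by
    simpa only [extend_apply, hval] using isMaxOn_iff.1 hmax y hy
  have hgx : 0 < evAt i x g := hk2.pow_pos_iff.1
    (pos_of_mul_pos_left ((mul_pos (pow_pos hgy _) (hW i y)).trans_le hyx) (hW i x).le)
  have hmax' := h.gradient_term_nonpos_of_isMaxOn hW (Metric.closedBall_mem_nhds_of_mem hx) hρΩ
    hmax hgx
  have hDx (f) (hf : f ∈ _) := hD f hf x hx.le
  calc evAt i y g ^ (k + 2) * evAt i y W ≤ evAt i x g ^ (k + 2) * evAt i x W := hyx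
    _ ≤ evAt i x W := mul_le_of_le_one_left (hW i x).le (pow_le_one₀ hgx.le (hg1 x hx.le))
    _ ≤ evAt i x W ^ 2 := le_self_pow₀ (h.one_le_evAt_W hW i x) two_ne_zero
    _ ≤ 2 + 8 * D ^ 2 / c ^ 2 := h.ev_W_sq_le_of_gradient_term _ (hDx _ (by simp))
        (hDx _ (by simp)) (hDx _ (by simp)) (hDx _ (by simp)) (hDx _ (by simp)) hc
        (h.one_le_evAt_W hW i x) hg hgx.le (hg1 x hx.le) (by positivity) hck hmax'

theorem W_mem_locBdd (hW : ∀ i x, 0 < evAt i x W) (hu : u ∈ LocBdd ι Ω) : W ∈ LocBdd ι Ω := by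
  intro x₀
  obtain ⟨M, hM, hMx⟩ := LocBdd.exists_pos hu x₀
  obtain ⟨ρ, hρ, hρΩ, hMρ⟩ := exists_closedBall_of_eventually_nhds hMx
  let F : ContDiffBump (x₀ : ℝ × ℝ) := ⟨ρ / 2, ρ, by positivity, by linarith⟩
  set η : SmoothFam ι Ω := const F F.contDiff
  have hη (i : ι) (x : Ω) : evAt i x η = F x := rfl
  obtain ⟨D, hD⟩ := LocBdd.exists_bound_of_isCompact_of_finite
    (s := {dX η, dY η, dX (dX η), dY (dX η), dY (dY η)}) (by simp)
    (by simp [insert_subset_iff, η, dX, dY, dirDer_const, const_mem_locBdd])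
    (isCompact_closedBall (x₀ : ℝ × ℝ) ρ) hρΩ
  set c : ℝ := 1 / (4 * M)
  have hc : 0 < c := by positivity
  have hcM : c * (2 * M) = 1 / 2 := by simp only [c]; field_simp; norm_num
  obtain ⟨n, hn⟩ := exists_nat_ge (4 * (4 * (1 + |H|) * D + 2 * c * |H|) / c ^ 2)
  set g : SmoothFam ι Ω := η + c • (u - algebraMap ℝ _ M)
  have hgval (i : ι) (x : Ω) : evAt i x g = F x + c * (evAt i x u - M) := by simp [g, hη]
  have hgle (i : ι) (x : Ω) (hx : (x : ℝ × ℝ) ∈ Metric.closedBall (x₀ : ℝ × ℝ) ρ) :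
      evAt i x g ≤ F x := by
    rw [hgval]
    linarith [mul_nonpos_of_nonneg_of_nonpos hc.le (sub_nonpos.2 (le_of_abs_le (hMρ x hx i)))]
  refine ⟨2 ^ (2 * n + 1 + 2) * (2 + 8 * D ^ 2 / c ^ 2), ?_⟩
  filter_upwards [continuous_subtype_val.continuousAt.eventually
    (Metric.closedBall_mem_nhds (x₀ : ℝ × ℝ) F.rIn_pos)] with y hy i
  have hyρ := Metric.closedBall_subset_closedBall F.rIn_lt_rOut.le hy
  have hgy : 1 / 2 ≤ evAt i y g := by
    rw [hgval, F.one_of_mem_closedBall hy]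
    linarith [mul_le_mul_of_nonneg_left (neg_le_of_abs_le (hMρ y hyρ i)) hc.le]
  have hle := h.pow_mul_evAt_W_le hW hρΩ (k := 2 * n + 1) rfl hc (fun f hf x hx => hD f hf i x hx)
    (fun x hx => (hgle i x hx).trans F.le_one)
    (fun x hx => (hgle i x hx.le).trans_eq (F.zero_of_le_dist hx.ge)) (odd_two_mul_add_one n)
    (by
      rw [div_le_iff₀' (by positivity)] at hn
      refine hn.trans (by gcongr; push_cast; linarith [(n.cast_nonneg : (0 : ℝ) ≤ n)]))
    hyρ (one_half_pos.trans_le hgy)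
  rw [abs_of_pos (hW i y), ← div_le_iff₀' (by positivity), div_eq_inv_mul, ← inv_pow,
    ← one_div (2 : ℝ)]
  exact (mul_le_mul_of_nonneg_right (pow_le_pow_left₀ (by norm_num) hgy _) (hW i y).le).trans hle

end IsCMCJet

end MaximumPrinciple

end GradientEstimate

section Curvature

namespace IsCMCJet

section Identities

variable {R : Type*} [CommRing R] [Algebra ℝ R] {H : ℝ} {dx dy : Derivation ℝ R R} {u W ν : R}

-- the squares on the right involve the entries of the traceless part of the second fundamental form
lemma one_add_dx_sq_mul_hopfSq (h : IsCMCJet H dx dy u W ν) :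
    (1 + dx u ^ 2) * hopfSq H dx dy u =
      (dx (dx u) - H • (W * (1 + dx u ^ 2))) ^ 2 + (dy (dx u) - H • (W * (dx u * dy u))) ^ 2
        + (dy u * (dx (dx u) - H • (W * (1 + dx u ^ 2)))
          - dx u * (dy (dx u) - H • (W * (dx u * dy u)))) ^ 2 := by
  have heqn := h.eqn
  simp only [ellOp_apply, hopfSq, Algebra.smul_def, map_pow, map_mul, map_ofNat] at heqn ⊢
  set c := algebraMap ℝ R H
  linear_combination -dx (dx u) * (heqn + 2 * c * W * h.sq)
    - (1 + dx u ^ 2) * c ^ 2 * (1 + dx u ^ 2 + dy u ^ 2) * h.sq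

lemma one_add_dy_sq_mul_hopfSq (h : IsCMCJet H dx dy u W ν) :
    (1 + dy u ^ 2) * hopfSq H dx dy u =
      (dy (dy u) - H • (W * (1 + dy u ^ 2))) ^ 2 + (dy (dx u) - H • (W * (dx u * dy u))) ^ 2
        + (dx u * (dy (dy u) - H • (W * (1 + dy u ^ 2)))
          - dy u * (dy (dx u) - H • (W * (dx u * dy u)))) ^ 2 := by
  have heqn := h.eqn
  simp only [ellOp_apply, hopfSq, Algebra.smul_def, map_pow, map_mul, map_ofNat] at heqn ⊢
  set c := algebraMap ℝ R H
  linear_combination -dy (dy u) * (heqn + 2 * c * W * h.sq)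
    - (1 + dy u ^ 2) * c ^ 2 * (1 + dx u ^ 2 + dy u ^ 2) * h.sq

end Identities

variable {ι : Type*} {Ω : Opens (ℝ × ℝ)} {H : ℝ} {u W ν : SmoothFam ι Ω}

lemma dX_mem_locBdd (h : IsCMCJet H dX dY u W ν) (hW : W ∈ LocBdd ι Ω) : dX u ∈ LocBdd ι Ω :=
  LocBdd.of_sq_le (pow_mem hW 2) fun i x => by
    rw [map_pow]
    exact sq_le_sq.2 (h.abs_ev_dx_le _)

lemma dY_mem_locBdd (h : IsCMCJet H dX dY u W ν) (hW : W ∈ LocBdd ι Ω) : dY u ∈ LocBdd ι Ω :=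
  LocBdd.of_sq_le (pow_mem hW 2) fun i x => by
    rw [map_pow]
    exact sq_le_sq.2 (h.abs_ev_dy_le _)

lemma ν_mem_locBdd (h : IsCMCJet H dX dY u W ν) (hW : ∀ i x, 0 < evAt i x W) :
    ν ∈ LocBdd ι Ω :=
  LocBdd.of_sq_le (one_mem _) fun i x => by
    rw [map_one, sq_le_one_iff₀ (h.evAt_ν_pos hW i x).le, ← h.ev_W_mul_ev_ν (evAt i x)]
    exact le_mul_of_one_le_left (h.evAt_ν_pos hW i x).le (h.one_le_evAt_W hW i x)

lemma coeffsMem_lapOp (h : IsCMCJet H dX dY u W ν) (hW : W ∈ LocBdd ι Ω) :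
    (lapOp H dX dY u W).CoeffsMem (LocBdd ι Ω) := by
  have hx := h.dX_mem_locBdd hW
  have hy := h.dY_mem_locBdd hW
  exact ⟨add_mem (one_mem _) (pow_mem hy 2), neg_mem (mul_mem hx hy),
    add_mem (one_mem _) (pow_mem hx 2), neg_mem (Subalgebra.smul_mem _ (mul_mem hW hx) _),
    neg_mem (Subalgebra.smul_mem _ (mul_mem hW hy) _)⟩

theorem hopfSq_mem_locBdd (h : IsCMCJet H dX dY u W ν) (hW : ∀ i x, 0 < evAt i x W)
    (hWb : W ∈ LocBdd ι Ω) : hopfSq H dX dY u ∈ LocBdd ι Ω := by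
  intro x₀
  set f := hopfSq H dX dY u
  obtain ⟨C, hC, hCx⟩ := LocBdd.exists_pos hWb x₀
  have hνC (i : ι) (x : Ω) (hx : |evAt i x W| ≤ C) : 1 / C ≤ evAt i x ν := by
    rw [div_le_iff₀' hC, ← h.ev_W_mul_ev_ν (evAt i x)]
    exact mul_le_mul_of_nonneg_right (le_of_abs_le hx) (h.evAt_ν_pos hW i x).le
  obtain ⟨D, hD⟩ := keller_osserman (L := lapOp H dX dY u W) (f := f) (x₀ := x₀)
    (κ := 4 * (1 / C) ^ 2) (C := 0) (fun i x => isEllipticAt_lapOp _) (h.coeffsMem_lapOp hWb)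
    (by positivity) le_rfl (by
      filter_upwards [hCx] with x hx i hf
      have hsymbol : 0 ≤ evAt i x ((ellOp dX dY u).symbol f f) :=
        (by positivity : (0 : ℝ) ≤ _).trans
          ((isUniformlyEllipticAt_ellOp (evAt i x)).sq_add_sq_le_symbol f)
      rw [sub_zero]
      refine le_of_mul_le_mul_left ?_ hf
      calc evAt i x f * (4 * (1 / C) ^ 2 * evAt i x f ^ 2)
          ≤ evAt i x f * (4 * evAt i x ν ^ 2 * evAt i x f ^ 2) := by
            gcongr
            exact hνC i x (hx i)
        _ = 4 * evAt i x ν ^ 2 * evAt i x f ^ 3 := by ring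
        _ ≤ _ := (h.simons_inequality (evAt i x)).trans (sub_le_self _ hsymbol))
  exact ⟨D, hD.mono fun x hx i => (abs_of_nonneg (h.hopfSq_nonneg (evAt i x))).trans_le (hx i)⟩

lemma second_derivatives_mem_locBdd (h : IsCMCJet H dX dY u W ν) (hW : ∀ i x, 0 < evAt i x W)
    (hWb : W ∈ LocBdd ι Ω) :
    dX (dX u) ∈ LocBdd ι Ω ∧ dY (dX u) ∈ LocBdd ι Ω ∧ dY (dY u) ∈ LocBdd ι Ω := by
  have hx := h.dX_mem_locBdd hWb
  have hy := h.dY_mem_locBdd hWb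
  have hx1 : 1 + dX u ^ 2 ∈ LocBdd ι Ω := add_mem (one_mem _) (pow_mem hx 2)
  have hy1 : 1 + dY u ^ 2 ∈ LocBdd ι Ω := add_mem (one_mem _) (pow_mem hy 2)
  have hf := h.hopfSq_mem_locBdd hW hWb
  have hsmul {g} (hg : g ∈ LocBdd ι Ω) : H • (W * g) ∈ LocBdd ι Ω :=
    Subalgebra.smul_mem _ (mul_mem hWb hg) H
  have of_sub {f g} (hg : g ∈ LocBdd ι Ω) (hfg : f - g ∈ LocBdd ι Ω) : f ∈ LocBdd ι Ω :=
    sub_add_cancel f g ▸ add_mem hfg hg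
  refine ⟨of_sub (hsmul hx1) (LocBdd.of_sq_le (mul_mem hx1 hf) fun i x => ?_),
    of_sub (hsmul (mul_mem hx hy)) (LocBdd.of_sq_le (mul_mem hx1 hf) fun i x => ?_),
    of_sub (hsmul hy1) (LocBdd.of_sq_le (mul_mem hy1 hf) fun i x => ?_)⟩
  · rw [h.one_add_dx_sq_mul_hopfSq, map_add, map_add, map_pow, map_pow, map_pow, add_assoc]
    exact le_add_of_nonneg_right (by positivity)
  · rw [h.one_add_dx_sq_mul_hopfSq, map_add, map_add, map_pow, map_pow, map_pow, add_right_comm]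
    exact le_add_of_nonneg_left (by positivity)
  · rw [h.one_add_dy_sq_mul_hopfSq, map_add, map_add, map_pow, map_pow, map_pow, add_assoc]
    exact le_add_of_nonneg_right (by positivity)

end IsCMCJet

end Curvature

section Prolongation

variable {R : Type*} [CommRing R] [Algebra ℝ R] {dx dy d : Derivation ℝ R R} {S : Set R}
  {a f m : R}

/-- The elements that are affine in the first derivatives of members of `S`, with coefficients in
the algebra generated by `S`. -/
def affineJets (dx dy : Derivation ℝ R R) (S : Set R) : Submodule (Algebra.adjoin ℝ S) R :=
  Submodule.span _ (insert 1 (dx '' S ∪ dy '' S))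

lemma mul_mem_affineJets (ha : a ∈ Algebra.adjoin ℝ S) (hm : m ∈ affineJets dx dy S) :
    a * m ∈ affineJets dx dy S :=
  (affineJets dx dy S).smul_mem ⟨a, ha⟩ hm

lemma mem_affineJets_of_mem_adjoin (ha : a ∈ Algebra.adjoin ℝ S) : a ∈ affineJets dx dy S :=
  mul_one a ▸ mul_mem_affineJets ha (Submodule.subset_span (mem_insert _ _))

lemma dx_mem_affineJets (hf : f ∈ S) : dx f ∈ affineJets dx dy S :=
  Submodule.subset_span (mem_insert_of_mem _ (.inl (mem_image_of_mem _ hf)))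

lemma dy_mem_affineJets (hf : f ∈ S) : dy f ∈ affineJets dx dy S :=
  Submodule.subset_span (mem_insert_of_mem _ (.inr (mem_image_of_mem _ hf)))

lemma derivation_mem_affineJets (hd : ∀ f ∈ S, d f ∈ affineJets dx dy S)
    (ha : a ∈ Algebra.adjoin ℝ S) : d a ∈ affineJets dx dy S := by
  induction ha using Algebra.adjoin_induction with
  | mem f hf => exact hd f hf
  | algebraMap c => rw [d.map_algebraMap]; exact zero_mem _
  | add f g _ _ hf hg => rw [map_add]; exact add_mem hf hg
  | mul f g hfS hgS hf hg =>
    rw [Derivation.leibniz]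
    exact add_mem (mul_mem_affineJets hfS hg) (mul_mem_affineJets hgS hf)

/-- The set `S` enlarged by the first derivatives of its members. -/
def prolong (dx dy : Derivation ℝ R R) (S : Set R) : Set R := S ∪ (dx '' S ∪ dy '' S)

lemma subset_prolong : S ⊆ prolong dx dy S := subset_union_left

lemma dx_mem_prolong (hf : f ∈ S) : dx f ∈ prolong dx dy S := .inr (.inl (mem_image_of_mem _ hf))

lemma dy_mem_prolong (hf : f ∈ S) : dy f ∈ prolong dx dy S := .inr (.inr (mem_image_of_mem _ hf))

lemma mem_adjoin_prolong (hm : m ∈ affineJets dx dy S) :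
    m ∈ Algebra.adjoin ℝ (prolong dx dy S) := by
  induction hm using Submodule.span_induction with
  | mem g hg =>
    obtain rfl | hg := hg
    exacts [one_mem _, Algebra.subset_adjoin (.inr hg)]
  | zero => exact zero_mem _
  | add _ _ _ _ hf hg => exact add_mem hf hg
  | smul a g _ hg => exact mul_mem (Algebra.adjoin_mono subset_prolong a.2) hg

namespace DiffOp

variable {L : DiffOp dx dy}

lemma CoeffsMem.mono {A B : Subalgebra ℝ R} (hL : L.CoeffsMem A) (hAB : A ≤ B) : L.CoeffsMem B :=
  ⟨hAB hL.xx, hAB hL.xy, hAB hL.yy, hAB hL.x, hAB hL.y⟩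

lemma CoeffsMem.apply_mem_affineJets (hL : L.CoeffsMem (Algebra.adjoin ℝ S))
    (hx : dx f ∈ affineJets dx dy S) (hy : dy f ∈ affineJets dx dy S)
    (hxx : dx (dx f) ∈ affineJets dx dy S) (hyx : dy (dx f) ∈ affineJets dx dy S)
    (hyy : dy (dy f) ∈ affineJets dx dy S) : L f ∈ affineJets dx dy S := by
  rw [L.apply_def]
  exact add_mem (add_mem (add_mem (add_mem (mul_mem_affineJets hL.xx hxx)
    (mul_mem_affineJets (mul_mem (ofNat_mem _ 2) hL.xy) hyx)) (mul_mem_affineJets hL.yy hyy))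
    (mul_mem_affineJets hL.x hx)) (mul_mem_affineJets hL.y hy)

/-- The operator obtained by differentiating the coefficients of `L`. -/
def derivCoeffs (d : Derivation ℝ R R) (L : DiffOp dx dy) : DiffOp dx dy :=
  ⟨d L.xx, d L.xy, d L.yy, d L.x, d L.y⟩

lemma apply_derivation (hx : ∀ g, d (dx g) = dx (d g)) (hy : ∀ g, d (dy g) = dy (d g)) (f : R) :
    L (d f) = d (L f) - L.derivCoeffs d f := by
  have hd2 : d 2 = 0 := d.map_natCast 2
  simp only [apply_def, derivCoeffs, map_add, Derivation.leibniz, smul_eq_mul, ← hx, ← hy, hd2]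
  ring

lemma apply_derivation_mem_affineJets (hx : ∀ g, d (dx g) = dx (d g))
    (hy : ∀ g, d (dy g) = dy (d g)) (hd : ∀ f ∈ S, d f ∈ affineJets dx dy S)
    (hL : (L.derivCoeffs d).CoeffsMem (Algebra.adjoin ℝ S)) (hf : L f ∈ Algebra.adjoin ℝ S)
    (hfx : dx f ∈ Algebra.adjoin ℝ S) (hfy : dy f ∈ Algebra.adjoin ℝ S)
    (hyx : dy (dx f) ∈ affineJets dx dy S) : L (d f) ∈ affineJets dx dy S := by
  rw [apply_derivation hx hy]
  exact sub_mem (derivation_mem_affineJets hd hf) (hL.apply_mem_affineJets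
    (mem_affineJets_of_mem_adjoin hfx) (mem_affineJets_of_mem_adjoin hfy)
    (derivation_mem_affineJets (fun _ => dx_mem_affineJets) hfx) hyx
    (derivation_mem_affineJets (fun _ => dy_mem_affineJets) hfy))

end DiffOp

/-- `S` solves a system with principal part `L` and right-hand sides of lower order, to which the
method of Bernstein applies. -/
structure IsClosedSystem (L : DiffOp dx dy) (S : Set R) : Prop where
  coeffs : L.CoeffsMem (Algebra.adjoin ℝ S)
  coeffs_dx : (L.derivCoeffs dx).CoeffsMem (Algebra.adjoin ℝ S)
  coeffs_dy : (L.derivCoeffs dy).CoeffsMem (Algebra.adjoin ℝ S)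
  apply_mem : ∀ f ∈ S, L f ∈ affineJets dx dy S

protected lemma IsClosedSystem.prolong {L : DiffOp dx dy} (comm : ∀ f, dx (dy f) = dy (dx f))
    (h : IsClosedSystem L S) : IsClosedSystem L (prolong dx dy S) := by
  have hle := Algebra.adjoin_mono (R := ℝ) (subset_prolong (S := S) (dx := dx) (dy := dy))
  refine ⟨h.coeffs.mono hle, h.coeffs_dx.mono hle, h.coeffs_dy.mono hle, ?_⟩
  rintro f (hf | ⟨f, hf, rfl⟩ | ⟨f, hf, rfl⟩)
  · exact mem_affineJets_of_mem_adjoin (mem_adjoin_prolong (h.apply_mem f hf))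
  · exact DiffOp.apply_derivation_mem_affineJets (fun _ => rfl) comm (fun _ => dx_mem_affineJets)
      (h.coeffs_dx.mono hle) (mem_adjoin_prolong (h.apply_mem f hf))
      (Algebra.subset_adjoin (dx_mem_prolong hf)) (Algebra.subset_adjoin (dy_mem_prolong hf))
      (dy_mem_affineJets (dx_mem_prolong hf))
  · exact DiffOp.apply_derivation_mem_affineJets (fun g => (comm g).symm) (fun _ => rfl)
      (fun _ => dy_mem_affineJets) (h.coeffs_dy.mono hle) (mem_adjoin_prolong (h.apply_mem f hf))
      (Algebra.subset_adjoin (dx_mem_prolong hf)) (Algebra.subset_adjoin (dy_mem_prolong hf))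
      (dy_mem_affineJets (dx_mem_prolong hf))

section CMC

variable {u W ν : R} {H : ℝ}

/-- The closed system with which the prolongation of the constant mean curvature equation starts. -/
def cmcSystem (dx dy : Derivation ℝ R R) (u W ν : R) : Set R :=
  {u, W, ν, dx u, dy u, dx (dx u), dy (dx u), dy (dy u)}

namespace IsCMCJet

section

variable (h : IsCMCJet H dx dy u W ν) {A : Subalgebra ℝ R} (hA : cmcSystem dx dy u W ν ⊆ A)
  (hdx : d (dx u) ∈ A) (hdy : d (dy u) ∈ A)

include hA in
lemma coeffsMem_ellOp : (ellOp dx dy u).CoeffsMem A := by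
  have hx : dx u ∈ A := hA (by simp [cmcSystem])
  have hy : dy u ∈ A := hA (by simp [cmcSystem])
  exact ⟨add_mem (one_mem _) (pow_mem hy 2), neg_mem (mul_mem hx hy),
    add_mem (one_mem _) (pow_mem hx 2), zero_mem _, zero_mem _⟩

include hA hdx hdy in
lemma coeffsMem_derivCoeffs_ellOp : ((ellOp dx dy u).derivCoeffs d).CoeffsMem A := by
  have hx : dx u ∈ A := hA (by simp [cmcSystem])
  have hy : dy u ∈ A := hA (by simp [cmcSystem])
  constructor <;>
    simp only [DiffOp.derivCoeffs, ellOp, map_add, map_neg, map_zero, pow_two, Derivation.leibniz,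
      Derivation.map_one_eq_zero, smul_eq_mul] <;> aesop

include hA hdx hdy in
lemma inner_grad_mem : dx u * d (dx u) + dy u * d (dy u) ∈ A :=
  add_mem (mul_mem (hA (by simp [cmcSystem])) hdx) (mul_mem (hA (by simp [cmcSystem])) hdy)

include h hA hdx hdy

lemma derivation_W_mem : d W ∈ A :=
  h.derivation_W d ▸ mul_mem (hA (by simp [cmcSystem])) (inner_grad_mem hA hdx hdy)

lemma derivation_ν_mem : d ν ∈ A :=
  h.derivation_ν d ▸ mul_mem (neg_mem (pow_mem (hA (by simp [cmcSystem])) 3))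
    (inner_grad_mem hA hdx hdy)

lemma ellOp_derivation_mem (hx : ∀ g, d (dx g) = dx (d g)) (hy : ∀ g, d (dy g) = dy (d g)) :
    ellOp dx dy u (d u) ∈ A := by
  rw [DiffOp.apply_derivation hx hy, h.derivation_eqn]
  exact sub_mem (A.smul_mem (mul_mem (hA (by simp [cmcSystem])) (inner_grad_mem hA hdx hdy)) _)
    ((coeffsMem_derivCoeffs_ellOp hA hdx hdy).apply_mem (hA (by simp [cmcSystem]))
      (hA (by simp [cmcSystem])) (hA (by simp [cmcSystem])) (hA (by simp [cmcSystem]))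
      (hA (by simp [cmcSystem])))

end

theorem isClosedSystem (h : IsCMCJet H dx dy u W ν) :
    IsClosedSystem (ellOp dx dy u) (cmcSystem dx dy u W ν) := by
  set S := cmcSystem dx dy u W ν with hS
  have hA : S ⊆ Algebra.adjoin ℝ S := Algebra.subset_adjoin
  have hxx : dx (dx u) ∈ Algebra.adjoin ℝ S := hA (by simp [hS, cmcSystem])
  have hyx : dy (dx u) ∈ Algebra.adjoin ℝ S := hA (by simp [hS, cmcSystem])
  have hxy : dx (dy u) ∈ Algebra.adjoin ℝ S := h.comm u ▸ hyx
  have hyy : dy (dy u) ∈ Algebra.adjoin ℝ S := hA (by simp [hS, cmcSystem])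
  have hcoeffs := coeffsMem_ellOp hA
  have hcoeffs_dx := coeffsMem_derivCoeffs_ellOp hA hxx hxy
  have hcoeffs_dy := coeffsMem_derivCoeffs_ellOp hA hyx hyy
  have hsymm (f : R) : dy (dx f) = dx (dy f) := (h.comm f).symm
  have of_first {f : R} (hx : dx f ∈ Algebra.adjoin ℝ S) (hy : dy f ∈ Algebra.adjoin ℝ S) :
      ellOp dx dy u f ∈ affineJets dx dy S :=
    hcoeffs.apply_mem_affineJets (mem_affineJets_of_mem_adjoin hx)
      (mem_affineJets_of_mem_adjoin hy)
      (derivation_mem_affineJets (fun _ => dx_mem_affineJets) hx)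
      (derivation_mem_affineJets (fun _ => dy_mem_affineJets) hx)
      (derivation_mem_affineJets (fun _ => dy_mem_affineJets) hy)
  have hux := h.ellOp_derivation_mem hA hxx hxy (fun _ => rfl) h.comm
  have huy := h.ellOp_derivation_mem hA hyx hyy hsymm fun _ => rfl
  refine ⟨hcoeffs, hcoeffs_dx, hcoeffs_dy, ?_⟩
  rintro f (rfl | rfl | rfl | rfl | rfl | rfl | rfl | rfl)
  · exact of_first (hA (by simp [hS, cmcSystem])) (hA (by simp [hS, cmcSystem]))
  · exact of_first (h.derivation_W_mem hA hxx hxy) (h.derivation_W_mem hA hyx hyy)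
  · exact of_first (h.derivation_ν_mem hA hxx hxy) (h.derivation_ν_mem hA hyx hyy)
  · exact of_first hxx hyx
  · exact of_first hxy hyy
  · exact DiffOp.apply_derivation_mem_affineJets (fun _ => rfl) h.comm
      (fun _ => dx_mem_affineJets) hcoeffs_dx hux hxx hyx
      (dy_mem_affineJets (by simp [hS, cmcSystem]))
  · exact DiffOp.apply_derivation_mem_affineJets hsymm (fun _ => rfl)
      (fun _ => dy_mem_affineJets) hcoeffs_dy hux hxx hyx
      (dy_mem_affineJets (by simp [hS, cmcSystem]))
  · exact DiffOp.apply_derivation_mem_affineJets hsymm (fun _ => rfl)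
      (fun _ => dy_mem_affineJets) hcoeffs_dy huy hxy hyy
      (h.comm u ▸ dy_mem_affineJets (by simp [hS, cmcSystem]))

end IsCMCJet

end CMC

end Prolongation

section BernsteinMethod

variable {R α : Type*} [CommRing R] [Algebra ℝ R] {dx dy d d' : Derivation ℝ R R}
  {L : DiffOp dx dy} {s : Finset R} {f g m : R}

section Energies

/-- The sum of the squares of the members of `s`. -/
def energy (s : Finset R) : R := ∑ f ∈ s, f * f

/-- The sum of the squared gradients of the members of `s`. -/
def gradEnergy (dx dy : Derivation ℝ R R) (s : Finset R) : R :=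
  ∑ f ∈ s, (dx f * dx f + dy f * dy f)

/-- The sum of the squared Hessians of the members of `s`. -/
def hessEnergy (dx dy : Derivation ℝ R R) (s : Finset R) : R :=
  ∑ f ∈ s, ((dx (dx f) * dx (dx f) + dy (dx f) * dy (dx f)) +
    (dx (dy f) * dx (dy f) + dy (dy f) * dy (dy f)))

lemma derivation_energy (d : Derivation ℝ R R) : d (energy s) = 2 * ∑ f ∈ s, f * d f := by
  simp only [energy, map_sum, Derivation.leibniz, smul_eq_mul, Finset.mul_sum, two_mul]

lemma derivation_gradEnergy (d : Derivation ℝ R R) : d (gradEnergy dx dy s) =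
    2 * ∑ f ∈ s, (dx f * d (dx f) + dy f * d (dy f)) := by
  rw [gradEnergy, map_sum, Finset.mul_sum]
  refine Finset.sum_congr rfl fun f _ => ?_
  simp only [map_add, Derivation.leibniz, smul_eq_mul]
  ring

lemma DiffOp.apply_energy (L : DiffOp dx dy) : L (energy s) =
    2 * (∑ f ∈ s, L.symbol f f) + 2 * (∑ f ∈ s, f * L f) := by
  rw [energy, map_sum, Finset.mul_sum, Finset.mul_sum, ← Finset.sum_add_distrib]
  refine Finset.sum_congr rfl fun f _ => ?_
  rw [L.apply_mul]
  ring

lemma DiffOp.apply_gradEnergy (L : DiffOp dx dy) : L (gradEnergy dx dy s) =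
    2 * (∑ f ∈ s, (L.symbol (dx f) (dx f) + L.symbol (dy f) (dy f))) +
    2 * (∑ f ∈ s, (dx f * L (dx f) + dy f * L (dy f))) := by
  rw [gradEnergy, map_sum, Finset.mul_sum, Finset.mul_sum, ← Finset.sum_add_distrib]
  refine Finset.sum_congr rfl fun f _ => ?_
  rw [map_add, L.apply_mul, L.apply_mul]
  ring

lemma DiffOp.apply_mul_algebraMap_add (L : DiffOp dx dy) (c : ℝ) (f g : R) :
    L (f * (algebraMap ℝ R c + g)) =
      (algebraMap ℝ R c + g) * L f + f * L g + 2 * L.symbol f g := by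
  have hconst : L (algebraMap ℝ R c) = 0 := by simp [L.apply_def]
  have hsymbol : L.symbol f (algebraMap ℝ R c + g) = L.symbol f g := by simp [symbol]
  rw [L.apply_mul, map_add, hconst, hsymbol]
  ring

variable (ev : R →ₐ[ℝ] ℝ)

lemma ev_energy : ev (energy s) = ∑ f ∈ s, ev f ^ 2 := by
  simp only [energy, map_sum, map_mul, pow_two]

lemma ev_gradEnergy : ev (gradEnergy dx dy s) = ∑ f ∈ s, (ev (dx f) ^ 2 + ev (dy f) ^ 2) := by
  simp only [gradEnergy, map_sum, map_add, map_mul, pow_two]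

lemma ev_hessEnergy : ev (hessEnergy dx dy s) = ∑ f ∈ s,
    ((ev (dx (dx f)) ^ 2 + ev (dy (dx f)) ^ 2) + (ev (dx (dy f)) ^ 2 + ev (dy (dy f)) ^ 2)) := by
  simp only [hessEnergy, map_sum, map_add, map_mul, pow_two]

lemma ev_energy_nonneg : 0 ≤ ev (energy s) := by
  rw [ev_energy]
  positivity

lemma ev_gradEnergy_nonneg : 0 ≤ ev (gradEnergy dx dy s) := by
  rw [ev_gradEnergy]
  positivity

lemma ev_hessEnergy_nonneg : 0 ≤ ev (hessEnergy dx dy s) := by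
  rw [ev_hessEnergy]
  positivity

lemma ev_sq_add_sq_le_gradEnergy (hf : f ∈ s) :
    ev (dx f) ^ 2 + ev (dy f) ^ 2 ≤ ev (gradEnergy dx dy s) := by
  rw [ev_gradEnergy]
  exact Finset.single_le_sum (f := fun f => ev (dx f) ^ 2 + ev (dy f) ^ 2)
    (fun f _ => by positivity) hf

lemma ev_sq_le_gradEnergy (hd : d = dx ∨ d = dy) (hf : f ∈ s) :
    ev (d f) ^ 2 ≤ ev (gradEnergy dx dy s) := by
  have hle := ev_sq_add_sq_le_gradEnergy (dx := dx) (dy := dy) ev hf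
  obtain rfl | rfl := hd
  · linarith [sq_nonneg (ev (dy f))]
  · linarith [sq_nonneg (ev (dx f))]

lemma ev_sq_le_hessEnergy (hd : d = dx ∨ d = dy) (hd' : d' = dx ∨ d' = dy) (hf : f ∈ s) :
    ev (d (d' f)) ^ 2 ≤ ev (hessEnergy dx dy s) := by
  rw [ev_hessEnergy]
  refine le_trans ?_ (Finset.single_le_sum (f := fun f => (ev (dx (dx f)) ^ 2 +
    ev (dy (dx f)) ^ 2) + (ev (dx (dy f)) ^ 2 + ev (dy (dy f)) ^ 2)) (fun f _ => by positivity) hf)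
  have hxx := sq_nonneg (ev (dx (dx f)))
  have hyx := sq_nonneg (ev (dy (dx f)))
  have hxy := sq_nonneg (ev (dx (dy f)))
  have hyy := sq_nonneg (ev (dy (dy f)))
  obtain rfl | rfl := hd <;> obtain rfl | rfl := hd' <;> linarith

/-- The norm of the gradient of the system `s` at the point represented by `ev`. -/
def gradNorm (dx dy : Derivation ℝ R R) (s : Finset R) (ev : R →ₐ[ℝ] ℝ) : ℝ :=
  √(ev (gradEnergy dx dy s))

/-- The norm of the Hessian of the system `s` at the point represented by `ev`. -/
def hessNorm (dx dy : Derivation ℝ R R) (s : Finset R) (ev : R →ₐ[ℝ] ℝ) : ℝ :=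
  √(ev (hessEnergy dx dy s))

lemma gradNorm_nonneg : 0 ≤ gradNorm dx dy s ev := Real.sqrt_nonneg _

lemma hessNorm_nonneg : 0 ≤ hessNorm dx dy s ev := Real.sqrt_nonneg _

lemma gradNorm_sq : gradNorm dx dy s ev ^ 2 = ev (gradEnergy dx dy s) :=
  Real.sq_sqrt (ev_gradEnergy_nonneg ev)

lemma hessNorm_sq : hessNorm dx dy s ev ^ 2 = ev (hessEnergy dx dy s) :=
  Real.sq_sqrt (ev_hessEnergy_nonneg ev)

lemma DiffOp.IsUniformlyEllipticAt.gradNorm_sq_le {ev : R →ₐ[ℝ] ℝ}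
    (hL : L.IsUniformlyEllipticAt ev) :
    gradNorm dx dy s ev ^ 2 ≤ ev (∑ f ∈ s, L.symbol f f) := by
  rw [gradNorm_sq, ev_gradEnergy, map_sum]
  exact Finset.sum_le_sum fun f _ => hL.sq_add_sq_le_symbol f

lemma DiffOp.IsUniformlyEllipticAt.hessNorm_sq_le {ev : R →ₐ[ℝ] ℝ}
    (hL : L.IsUniformlyEllipticAt ev) : hessNorm dx dy s ev ^ 2 ≤
      ev (∑ f ∈ s, (L.symbol (dx f) (dx f) + L.symbol (dy f) (dy f))) := by
  rw [hessNorm_sq, ev_hessEnergy, map_sum]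
  refine Finset.sum_le_sum fun f _ => ?_
  rw [map_add]
  exact add_le_add (hL.sq_add_sq_le_symbol _) (hL.sq_add_sq_le_symbol _)

end Energies

section Domination

open Asymptotics

variable {ev : α → R →ₐ[ℝ] ℝ} {l : Filter α} {F G : α → ℝ}

/-- The algebra of the elements whose evaluations are bounded along the filter `l`. -/
def boundedAlong (ev : α → R →ₐ[ℝ] ℝ) (l : Filter α) : Subalgebra ℝ R where
  carrier := {f | (fun p => ev p f) =O[l] fun _ => (1 : ℝ)}
  mul_mem' hf hg := by simpa only [mem_ofPred_eq, map_mul, mul_one] using hf.mul hg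
  add_mem' hf hg := by simpa only [mem_ofPred_eq, map_add] using hf.add hg
  algebraMap_mem' c := by
    simpa only [mem_ofPred_eq, AlgHom.commutes] using isBigO_const_const _ one_ne_zero l

lemma isBigO_mul_of_mem_boundedAlong (hf : f ∈ boundedAlong ev l)
    (hg : (fun p => ev p g) =O[l] G) : (fun p => ev p (f * g)) =O[l] G := by
  simpa only [map_mul, one_mul] using IsBigO.mul hf hg

lemma DiffOp.CoeffsMem.isBigO_symbol (hL : L.CoeffsMem (boundedAlong ev l))
    (hf : ∀ d, d = dx ∨ d = dy → (fun p => ev p (d f)) =O[l] F)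
    (hg : ∀ d, d = dx ∨ d = dy → (fun p => ev p (d g)) =O[l] G) :
    (fun p => ev p (L.symbol f g)) =O[l] fun p => F p * G p := by
  have hprod {d d' : Derivation ℝ R R} (hd : d = dx ∨ d = dy) (hd' : d' = dx ∨ d' = dy) :
      (fun p => ev p (d f * d' g)) =O[l] fun p => F p * G p := by
    simpa only [map_mul] using (hf d hd).mul (hg d' hd')
  have hxy : (fun p => ev p (dx f * dy g + dy f * dx g)) =O[l] fun p => F p * G p := by
    simpa only [map_add] using (hprod (.inl rfl) (.inr rfl)).add (hprod (.inr rfl) (.inl rfl))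
  simp only [symbol, map_add]
  exact ((isBigO_mul_of_mem_boundedAlong hL.xx (hprod (.inl rfl) (.inl rfl))).add
    (isBigO_mul_of_mem_boundedAlong hL.xy hxy)).add
    (isBigO_mul_of_mem_boundedAlong hL.yy (hprod (.inr rfl) (.inr rfl)))

lemma isBigO_gradNorm (hd : d = dx ∨ d = dy) (hf : f ∈ s) :
    (fun p => ev p (d f)) =O[l] fun p => gradNorm dx dy s (ev p) :=
  .of_norm_le fun p => Real.abs_le_sqrt (ev_sq_le_gradEnergy (ev p) hd hf)

lemma isBigO_hessNorm (hd : d = dx ∨ d = dy) (hd' : d' = dx ∨ d' = dy) (hf : f ∈ s) :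
    (fun p => ev p (d (d' f))) =O[l] fun p => hessNorm dx dy s (ev p) :=
  .of_norm_le fun p => Real.abs_le_sqrt (ev_sq_le_hessEnergy (ev p) hd hd' hf)

/-- The growth of the second-order terms in the Bernstein method, which is quadratic in the gradient
and linear in the Hessian. -/
def bernsteinWeight (dx dy : Derivation ℝ R R) (s : Finset R) (ev : R →ₐ[ℝ] ℝ) : ℝ :=
  1 + gradNorm dx dy s ev ^ 2 + hessNorm dx dy s ev

lemma isBigO_bernsteinWeight_of_le (c : ℝ) (hF : ∀ p, 0 ≤ F p)
    (h : ∀ p, F p ≤ c * bernsteinWeight dx dy s (ev p)) :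
    F =O[l] fun p => bernsteinWeight dx dy s (ev p) :=
  isBigO_of_le' (c := c) l fun p => by
    have hweight : 0 ≤ bernsteinWeight dx dy s (ev p) :=
      add_nonneg (by positivity) (hessNorm_nonneg _)
    simpa only [norm_of_nonneg (hF p), norm_of_nonneg hweight] using h p

lemma isBigO_one_add_gradNorm_sq : (fun p => (1 + gradNorm dx dy s (ev p)) ^ 2) =O[l]
    fun p => bernsteinWeight dx dy s (ev p) :=
  isBigO_bernsteinWeight_of_le 2 (fun p => sq_nonneg _) fun p => by
    rw [bernsteinWeight]
    linarith [hessNorm_nonneg (dx := dx) (dy := dy) (s := s) (ev p),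
      sq_nonneg (gradNorm dx dy s (ev p) - 1)]

lemma isBigO_gradNorm_bernsteinWeight : (fun p => gradNorm dx dy s (ev p)) =O[l]
    fun p => bernsteinWeight dx dy s (ev p) :=
  isBigO_bernsteinWeight_of_le 1 (fun p => gradNorm_nonneg _) fun p => by
    rw [bernsteinWeight]
    linarith [hessNorm_nonneg (dx := dx) (dy := dy) (s := s) (ev p),
      sq_nonneg (gradNorm dx dy s (ev p) - 1), sq_nonneg (gradNorm dx dy s (ev p))]

lemma isBigO_hessNorm_bernsteinWeight : (fun p => hessNorm dx dy s (ev p)) =O[l]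
    fun p => bernsteinWeight dx dy s (ev p) :=
  isBigO_bernsteinWeight_of_le 1 (fun p => hessNorm_nonneg _) fun p => by
    rw [bernsteinWeight]
    linarith [sq_nonneg (gradNorm dx dy s (ev p))]

lemma isBigO_gradNorm_one_add_gradNorm : (fun p => gradNorm dx dy s (ev p)) =O[l]
    fun p => 1 + gradNorm dx dy s (ev p) :=
  .of_norm_le fun p => by
    rw [norm_of_nonneg (gradNorm_nonneg _)]
    linarith

lemma DiffOp.CoeffsMem.isBigO_apply (hL : L.CoeffsMem (boundedAlong ev l)) (hf : f ∈ s) :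
    (fun p => ev p (L f)) =O[l] fun p => bernsteinWeight dx dy s (ev p) := by
  have hfirst {a : R} (ha : a ∈ boundedAlong ev l) {d : Derivation ℝ R R} (hd : d = dx ∨ d = dy) :=
    (isBigO_mul_of_mem_boundedAlong ha (isBigO_gradNorm hd hf)).trans
      isBigO_gradNorm_bernsteinWeight
  have hsecond {a : R} (ha : a ∈ boundedAlong ev l) {d d' : Derivation ℝ R R}
      (hd : d = dx ∨ d = dy) (hd' : d' = dx ∨ d' = dy) :=
    (isBigO_mul_of_mem_boundedAlong ha (isBigO_hessNorm hd hd' hf)).trans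
      isBigO_hessNorm_bernsteinWeight
  simp only [L.apply_def, map_add]
  exact ((((hsecond hL.xx (.inl rfl) (.inl rfl)).add
    (hsecond (mul_mem (ofNat_mem _ 2) hL.xy) (.inr rfl) (.inl rfl))).add
    (hsecond hL.yy (.inr rfl) (.inr rfl))).add (hfirst hL.x (.inl rfl))).add
    (hfirst hL.y (.inr rfl))

variable (hs : (s : Set R) ⊆ boundedAlong ev l)

include hs

lemma isBigO_of_mem_affineJets (hm : m ∈ affineJets dx dy (s : Set R)) :
    (fun p => ev p m) =O[l] fun p => 1 + gradNorm dx dy s (ev p) := by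
  induction hm using Submodule.span_induction with
  | mem g hg =>
    obtain rfl | ⟨f, hf, rfl⟩ | ⟨f, hf, rfl⟩ := hg
    · refine .of_norm_le fun p => ?_
      simpa using gradNorm_nonneg (dx := dx) (dy := dy) (s := s) (ev p)
    · exact (isBigO_gradNorm (.inl rfl) hf).trans isBigO_gradNorm_one_add_gradNorm
    · exact (isBigO_gradNorm (.inr rfl) hf).trans isBigO_gradNorm_one_add_gradNorm
  | zero => simpa only [map_zero] using isBigO_zero _ l
  | add f g _ _ hf hg => simpa only [map_add] using hf.add hg
  | smul a f _ hf => exact isBigO_mul_of_mem_boundedAlong (Algebra.adjoin_le hs a.2) hf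

lemma isBigO_derivation_of_mem_affineJets (hd : d = dx ∨ d = dy)
    (hm : m ∈ affineJets dx dy (s : Set R)) :
    (fun p => ev p (d m)) =O[l] fun p => bernsteinWeight dx dy s (ev p) := by
  have hdS : ∀ f ∈ (s : Set R), d f ∈ affineJets dx dy (s : Set R) := by
    obtain rfl | rfl := hd
    exacts [fun _ => dx_mem_affineJets, fun _ => dy_mem_affineJets]
  induction hm using Submodule.span_induction with
  | mem g hg =>
    obtain rfl | ⟨f, hf, rfl⟩ | ⟨f, hf, rfl⟩ := hg
    · simpa only [Derivation.map_one_eq_zero, map_zero] using isBigO_zero _ l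
    · exact (isBigO_hessNorm hd (.inl rfl) hf).trans isBigO_hessNorm_bernsteinWeight
    · exact (isBigO_hessNorm hd (.inr rfl) hf).trans isBigO_hessNorm_bernsteinWeight
  | zero => simpa only [map_zero] using isBigO_zero _ l
  | add f g _ _ hf hg => simpa only [map_add] using hf.add hg
  | smul a f hfm hf =>
    have hderiv := ((isBigO_of_mem_affineJets hs hfm).mul
      (isBigO_of_mem_affineJets hs (derivation_mem_affineJets hdS a.2))).trans
      ((isBigO_one_add_gradNorm_sq (dx := dx) (dy := dy) (s := s)).congr_left fun p => pow_two _)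
    have hleibniz (p : α) : ev p (d (a • f)) = ev p (a * d f) + ev p f * ev p (d a) := by
      rw [Subalgebra.smul_def, smul_eq_mul, Derivation.leibniz, map_add, smul_eq_mul, smul_eq_mul,
        map_mul (ev p) f]
    simpa only [hleibniz] using
      (isBigO_mul_of_mem_boundedAlong (Algebra.adjoin_le hs a.2) hf).add hderiv

lemma IsClosedSystem.isBigO_apply_derivation (h : IsClosedSystem L (s : Set R))
    (comm : ∀ f, dx (dy f) = dy (dx f)) (hd : d = dx ∨ d = dy) (hf : f ∈ s) :
    (fun p => ev p (L (d f))) =O[l] fun p => bernsteinWeight dx dy s (ev p) := by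
  have hcoeffs : (L.derivCoeffs d).CoeffsMem (boundedAlong ev l) := by
    obtain rfl | rfl := hd
    exacts [h.coeffs_dx.mono (Algebra.adjoin_le hs), h.coeffs_dy.mono (Algebra.adjoin_le hs)]
  have hcomm : (∀ g, d (dx g) = dx (d g)) ∧ ∀ g, d (dy g) = dy (d g) := by
    obtain rfl | rfl := hd
    exacts [⟨fun _ => rfl, comm⟩, ⟨fun g => (comm g).symm, fun _ => rfl⟩]
  simp only [DiffOp.apply_derivation hcomm.1 hcomm.2, map_sub]
  exact (isBigO_derivation_of_mem_affineJets hs hd (h.apply_mem f hf)).sub (hcoeffs.isBigO_apply hf)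

lemma IsClosedSystem.isBigO_sum_derivation_mul_apply (h : IsClosedSystem L (s : Set R))
    (comm : ∀ f, dx (dy f) = dy (dx f)) :
    (fun p => ev p (∑ f ∈ s, (dx f * L (dx f) + dy f * L (dy f)))) =O[l]
      fun p => gradNorm dx dy s (ev p) * bernsteinWeight dx dy s (ev p) := by
  simp only [map_sum, map_add, map_mul]
  exact .fun_sum fun f hf =>
    ((isBigO_gradNorm (.inl rfl) hf).mul (h.isBigO_apply_derivation hs comm (.inl rfl) hf)).add
      ((isBigO_gradNorm (.inr rfl) hf).mul (h.isBigO_apply_derivation hs comm (.inr rfl) hf))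

lemma IsClosedSystem.isBigO_sum_mul_apply (h : IsClosedSystem L (s : Set R)) :
    (fun p => ev p (∑ f ∈ s, f * L f)) =O[l] fun p => 1 + gradNorm dx dy s (ev p) := by
  simp only [map_sum]
  exact .fun_sum fun f hf =>
    isBigO_mul_of_mem_boundedAlong (hs hf) (isBigO_of_mem_affineJets hs (h.apply_mem f hf))

lemma IsClosedSystem.isBigO_symbol_gradEnergy_energy (h : IsClosedSystem L (s : Set R)) :
    (fun p => ev p (L.symbol (gradEnergy dx dy s) (energy s))) =O[l]
      fun p => gradNorm dx dy s (ev p) ^ 2 * hessNorm dx dy s (ev p) := by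
  have henergy (d : Derivation ℝ R R) (hd : d = dx ∨ d = dy) :
      (fun p => ev p (d (energy s))) =O[l] fun p => gradNorm dx dy s (ev p) := by
    rw [derivation_energy]
    refine isBigO_mul_of_mem_boundedAlong (ofNat_mem _ 2) ?_
    simp only [map_sum]
    exact .fun_sum fun f hf => isBigO_mul_of_mem_boundedAlong (hs hf) (isBigO_gradNorm hd hf)
  have hgradEnergy (d : Derivation ℝ R R) (hd : d = dx ∨ d = dy) :
      (fun p => ev p (d (gradEnergy dx dy s))) =O[l]
        fun p => gradNorm dx dy s (ev p) * hessNorm dx dy s (ev p) := by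
    rw [derivation_gradEnergy]
    refine isBigO_mul_of_mem_boundedAlong (ofNat_mem _ 2) ?_
    simp only [map_sum, map_add, map_mul]
    exact .fun_sum fun f hf =>
      ((isBigO_gradNorm (.inl rfl) hf).mul (isBigO_hessNorm hd (.inl rfl) hf)).add
        ((isBigO_gradNorm (.inr rfl) hf).mul (isBigO_hessNorm hd (.inr rfl) hf))
  exact ((h.coeffs.mono (Algebra.adjoin_le hs)).isBigO_symbol hgradEnergy henergy).congr_right
    fun p => by ring

end Domination

end BernsteinMethod

section InteriorEstimates

/-- The absorption of the error terms in the Bernstein inequality: `x` and `y` are the norms of the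
gradient and of the Hessian of the system, `r` its energy, `G₁`, `G₂` and `E₁`, `E₂` the leading and
the error terms in the equations of the energies, and `B` the cross term. -/
lemma exists_absorption {Λ C : ℝ} (hΛ : 4 * C ^ 2 ≤ Λ) :
    ∃ D ≥ 0, ∀ {r G₁ G₂ E₁ E₂ B x y : ℝ}, 0 ≤ r → r ≤ Λ → y ^ 2 ≤ G₁ → x ^ 2 ≤ G₂ →
      |E₁| ≤ C * (x * (1 + x ^ 2 + y)) → |E₂| ≤ C * (1 + x) → |B| ≤ C * (x ^ 2 * y) →
      x ^ 4 - D ≤ (Λ + r) * (2 * G₁ + 2 * E₁) + x ^ 2 * (2 * G₂ + 2 * E₂) + 2 * B := by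
  obtain ⟨a, ha⟩ : ∃ a, a = 2 * C + 4 * Λ * C := ⟨_, rfl⟩
  obtain ⟨b, hb⟩ : ∃ b, b = 2 * C + 4 * Λ * C ^ 2 + a ^ 2 + 1 := ⟨_, rfl⟩
  refine ⟨b ^ 2 + (4 * Λ * C) ^ 2, by positivity, ?_⟩
  intro r G₁ G₂ E₁ E₂ B x y hr hrΛ hG₁ hG₂ hE₁ hE₂ hB
  have hΛ0 : 0 ≤ Λ := hr.trans hrΛ
  have lower_E₁ : -(2 * Λ * (C * (x * (1 + x ^ 2 + y)))) ≤ (Λ + r) * E₁ := by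
    refine neg_le_of_abs_le ?_
    rw [abs_mul, abs_of_nonneg (by linarith : 0 ≤ Λ + r)]
    gcongr
    linarith
  have lower_E₂ : -(x ^ 2 * (C * (1 + x))) ≤ x ^ 2 * E₂ := by
    rw [← mul_neg]
    exact mul_le_mul_of_nonneg_left (neg_le_of_abs_le hE₂) (sq_nonneg x)
  have lower_B := neg_le_of_abs_le hB
  have lower_G₁ : Λ * y ^ 2 ≤ (Λ + r) * G₁ := by gcongr; linarith
  have lower_G₂ : x ^ 2 * x ^ 2 ≤ x ^ 2 * G₂ := by gcongr
  have absorb_xy : 4 * Λ * C * (x * y) ≤ Λ * y ^ 2 + 4 * Λ * C ^ 2 * x ^ 2 := by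
    linarith [mul_nonneg hΛ0 (sq_nonneg (y - 2 * C * x))]
  have absorb_xxy : 2 * C * (x ^ 2 * y) ≤ Λ * y ^ 2 + x ^ 4 / 4 := by
    linarith [sq_nonneg (2 * C * y - x ^ 2 / 2), mul_le_mul_of_nonneg_right hΛ (sq_nonneg y)]
  have absorb_cubic : 2 * C * x ^ 3 + 4 * Λ * C * x ^ 3 ≤ x ^ 4 / 4 + a ^ 2 * x ^ 2 := by
    rw [← add_mul, ← ha]
    linarith [sq_nonneg (x ^ 2 / 2 - a * x)]
  have absorb_quadratic :
      2 * C * x ^ 2 + 4 * Λ * C ^ 2 * x ^ 2 + a ^ 2 * x ^ 2 + x ^ 2 ≤ x ^ 4 / 4 + b ^ 2 := by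
    rw [← add_mul, ← add_mul, ← add_one_mul, ← hb]
    linarith [sq_nonneg (x ^ 2 / 2 - b)]
  have absorb_linear : 4 * Λ * C * x ≤ x ^ 2 + (4 * Λ * C) ^ 2 := by
    linarith [sq_nonneg (x - 4 * Λ * C), sq_nonneg x, sq_nonneg (4 * Λ * C)]
  linear_combination 2 * lower_E₁ + 2 * lower_E₂ + 2 * lower_B + 2 * lower_G₁ + 2 * lower_G₂ +
    absorb_xy + absorb_xxy + absorb_cubic + absorb_quadratic + absorb_linear +
    (by positivity : 0 ≤ x ^ 4 / 4)

theorem IsClosedSystem.bernstein_inequality {R α : Type*} [CommRing R] [Algebra ℝ R]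
    {dx dy : Derivation ℝ R R} {L : DiffOp dx dy} {s : Finset R} {ev : α → R →ₐ[ℝ] ℝ}
    {l : Filter α} (h : IsClosedSystem L (s : Set R)) (comm : ∀ f, dx (dy f) = dy (dx f))
    (hs : (s : Set R) ⊆ boundedAlong ev l) (hell : ∀ p, L.IsUniformlyEllipticAt (ev p)) :
    ∃ Λ > 0, ∃ C ≥ 0, ∀ᶠ p in l, ev p (energy s) ≤ Λ ∧ ev p (gradEnergy dx dy s) ^ 2 - C ≤
      ev p (L (gradEnergy dx dy s * (algebraMap ℝ R Λ + energy s))) := by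
  obtain ⟨C₁, hC₁, hE₁⟩ := (h.isBigO_sum_derivation_mul_apply hs comm).exists_nonneg
  obtain ⟨C₂, hC₂, hE₂⟩ := (h.isBigO_sum_mul_apply hs).exists_nonneg
  obtain ⟨C₃, hC₃, hB⟩ := (h.isBigO_symbol_gradEnergy_energy hs).exists_nonneg
  have henergy : energy s ∈ boundedAlong ev l := sum_mem fun f hf => mul_mem (hs hf) (hs hf)
  obtain ⟨C₀, hC₀, h₀⟩ := Asymptotics.IsBigO.exists_nonneg henergy
  obtain ⟨C, hC⟩ : ∃ C, C = C₁ + C₂ + C₃ := ⟨_, rfl⟩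
  obtain ⟨Λ, hΛ⟩ : ∃ Λ, Λ = 1 + C₀ + 4 * C ^ 2 := ⟨_, rfl⟩
  have hΛ0 : 0 < Λ := by rw [hΛ]; positivity
  obtain ⟨D, hD, habsorb⟩ := exists_absorption (by rw [hΛ]; linarith : 4 * C ^ 2 ≤ Λ)
  refine ⟨Λ, hΛ0, D, hD, ?_⟩
  filter_upwards [h₀.bound, (hE₁.weaken (by linarith : C₁ ≤ C)).bound,
    (hE₂.weaken (by linarith : C₂ ≤ C)).bound, (hB.weaken (by linarith : C₃ ≤ C)).bound]
    with p h₀ hE₁ hE₂ hB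
  have hgrad := gradNorm_nonneg (dx := dx) (dy := dy) (s := s) (ev p)
  have hhess := hessNorm_nonneg (dx := dx) (dy := dy) (s := s) (ev p)
  rw [Real.norm_eq_abs, norm_of_nonneg (by unfold bernsteinWeight; positivity)] at hE₁
  rw [Real.norm_eq_abs, norm_of_nonneg (by positivity)] at hE₂ hB
  rw [norm_one, mul_one] at h₀
  have hle : ev p (energy s) ≤ Λ :=
    (le_abs_self _).trans (h₀.trans (by linarith [sq_nonneg C]))
  refine ⟨hle, ?_⟩
  rw [L.apply_mul_algebraMap_add, L.apply_energy, L.apply_gradEnergy]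
  simp only [map_add (ev p), map_mul, map_ofNat, AlgHom.commutes, Algebra.algebraMap_self,
    RingHom.id_apply, ← gradNorm_sq, ← pow_mul]
  exact habsorb (ev_energy_nonneg (ev p)) hle (hell p).hessNorm_sq_le (hell p).gradNorm_sq_le
    hE₁ hE₂ hB

variable {ι : Type*} {Ω : Opens (ℝ × ℝ)} {s : Finset (SmoothFam ι Ω)}
  {L : DiffOp (dX : Derivation ℝ (SmoothFam ι Ω) (SmoothFam ι Ω)) dY}

lemma locBdd_le_boundedAlong (x₀ : Ω) : LocBdd ι Ω ≤
    boundedAlong (fun p : Ω × ι => evAt p.2 p.1) (nhds x₀ ×ˢ ⊤) := fun f hf => by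
  obtain ⟨C, hC⟩ := hf x₀
  refine .of_bound C (mem_prod_top.2 ?_)
  filter_upwards [hC] with x hx i
  simpa using hx i

/-- Since `|∇s|² (Λ + |s|²) ≤ 2 Λ |∇s|²`, the Bernstein inequality is of Keller–Osserman type. -/
lemma IsClosedSystem.gradEnergy_mem_locBdd (h : IsClosedSystem L (s : Set (SmoothFam ι Ω)))
    (hs : (s : Set (SmoothFam ι Ω)) ⊆ LocBdd ι Ω)
    (hell : ∀ i x, L.IsUniformlyEllipticAt (evAt i x)) : gradEnergy dX dY s ∈ LocBdd ι Ω := by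
  intro x₀
  obtain ⟨Λ, hΛ, C, hC, hbern⟩ := h.bernstein_inequality dX_dY_comm
    (hs.trans (locBdd_le_boundedAlong x₀)) fun p => hell p.2 p.1
  rw [Filter.Eventually, mem_prod_top] at hbern
  set P := gradEnergy dX dY s
  set Q := energy s
  have hP (i x) : 0 ≤ evAt i x P := ev_gradEnergy_nonneg _
  have hev (i x) : evAt i x (P * (algebraMap ℝ _ Λ + Q)) = evAt i x P * (Λ + evAt i x Q) := by
    simp only [map_add, map_mul, AlgHom.commutes, Algebra.algebraMap_self, RingHom.id_apply]
  have hle (i x) : evAt i x P * Λ ≤ evAt i x (P * (algebraMap ℝ _ Λ + Q)) := by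
    rw [hev]
    have := hP i x
    gcongr
    linarith [ev_energy_nonneg (s := s) (evAt i x)]
  obtain ⟨D, hD⟩ := keller_osserman (κ := 1 / (2 * Λ) ^ 2) (x₀ := x₀)
    (f := P * (algebraMap ℝ _ Λ + Q)) (fun i x => (hell i x).isEllipticAt)
    (h.coeffs.mono (Algebra.adjoin_le hs)) (by positivity) hC <| by
      filter_upwards [hbern] with x hx i hpos
      have hupper : evAt i x (P * (algebraMap ℝ _ Λ + Q)) ≤ evAt i x P * (2 * Λ) := by
        rw [hev]
        have := hP i x
        gcongr
        linarith [(hx i).1]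
      refine (sub_le_sub_right ?_ C).trans (hx i).2
      rw [one_div_mul_eq_div, ← div_pow]
      gcongr
      exact (div_le_iff₀ (by positivity)).2 hupper
  refine ⟨D / Λ, hD.mono fun x hx i => ?_⟩
  rw [abs_of_nonneg (hP i x), le_div_iff₀ hΛ]
  exact (hle i x).trans (hx i)

lemma IsClosedSystem.derivatives_mem_locBdd (h : IsClosedSystem L (s : Set (SmoothFam ι Ω)))
    (hs : (s : Set (SmoothFam ι Ω)) ⊆ LocBdd ι Ω)
    (hell : ∀ i x, L.IsUniformlyEllipticAt (evAt i x)) {f : SmoothFam ι Ω} (hf : f ∈ s) :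
    dX f ∈ LocBdd ι Ω ∧ dY f ∈ LocBdd ι Ω :=
  ⟨LocBdd.of_sq_le (h.gradEnergy_mem_locBdd hs hell) fun _ _ =>
    ev_sq_le_gradEnergy _ (.inl rfl) hf, LocBdd.of_sq_le (h.gradEnergy_mem_locBdd hs hell)
    fun _ _ => ev_sq_le_gradEnergy _ (.inr rfl) hf⟩

/-- The families all of whose iterated partial derivatives of order at most `k` are locally bounded,
uniformly in the index. -/
def LocBddDer {ι : Type*} {Ω : Opens (ℝ × ℝ)} : ℕ → SmoothFam ι Ω → Prop
  | 0, f => f ∈ LocBdd ι Ω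
  | k + 1, f => f ∈ LocBdd ι Ω ∧ LocBddDer k (dX f) ∧ LocBddDer k (dY f)

lemma IsClosedSystem.locBddDer {S : Set (SmoothFam ι Ω)} (h : IsClosedSystem L S)
    (hfin : S.Finite) (hS : S ⊆ LocBdd ι Ω) (hell : ∀ i x, L.IsUniformlyEllipticAt (evAt i x))
    (k : ℕ) {f : SmoothFam ι Ω} (hf : f ∈ S) : LocBddDer k f := by
  induction k generalizing S f with
  | zero => exact hS hf
  | succ k ih =>
    obtain ⟨s, rfl⟩ := hfin.exists_finset_coe
    have hprolong : prolong dX dY (s : Set (SmoothFam ι Ω)) ⊆ LocBdd ι Ω := by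
      rintro g (hg | ⟨g, hg, rfl⟩ | ⟨g, hg, rfl⟩)
      exacts [hS hg, (h.derivatives_mem_locBdd hS hell hg).1,
        (h.derivatives_mem_locBdd hS hell hg).2]
    have hfin' : (prolong dX dY (s : Set (SmoothFam ι Ω))).Finite :=
      hfin.union ((hfin.image _).union (hfin.image _))
    exact ⟨hS hf, ih (h.prolong dX_dY_comm) hfin' hprolong (dx_mem_prolong hf),
      ih (h.prolong dX_dY_comm) hfin' hprolong (dy_mem_prolong hf)⟩

theorem IsCMCJet.locBddDer {H : ℝ} {u W ν : SmoothFam ι Ω} (h : IsCMCJet H dX dY u W ν)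
    (hW : ∀ i x, 0 < evAt i x W) (hu : u ∈ LocBdd ι Ω) (k : ℕ) : LocBddDer k u := by
  have hWb := h.W_mem_locBdd hW hu
  obtain ⟨hxx, hyx, hyy⟩ := h.second_derivatives_mem_locBdd hW hWb
  refine h.isClosedSystem.locBddDer (by simp [cmcSystem]) ?_
    (fun i x => isUniformlyEllipticAt_ellOp (evAt i x)) k (.inl rfl)
  rintro f (rfl | rfl | rfl | rfl | rfl | rfl | rfl | rfl)
  exacts [hu, hWb, h.ν_mem_locBdd hW, h.dX_mem_locBdd hWb, h.dY_mem_locBdd hWb, hxx, hyx, hyy]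

end InteriorEstimates

section SmoothCompactness

lemma isCompact_closure_range_of_equicontinuous {X F ι : Type*} [TopologicalSpace X]
    [WeaklyLocallyCompactSpace X] [NormedAddCommGroup F] [ProperSpace F] {g : ι → C(X, F)}
    (hg : Equicontinuous fun i => ⇑(g i)) (hbd : ∀ x, ∃ C, ∀ i, ‖g i x‖ ≤ C) :
    IsCompact (closure (range g)) := by
  have := UniformOnFun.t2Space_of_covering (β := F) (𝔖 := {K : Set X | IsCompact K})
    (sUnion_eq_univ_iff.2 fun x => ⟨{x}, isCompact_singleton, rfl⟩)
  refine ArzelaAscoli.isCompact_closure_of_isClosedEmbedding (F := fun f : C(X, F) => ⇑f)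
    (𝔖 := {K | IsCompact K}) (fun _ => id)
    ContinuousMap.isUniformEmbedding_toUniformOnFunIsCompact.isClosedEmbedding
    (fun K _ => Equicontinuous.equicontinuousOn ?_ K) fun K _ x _ => ?_
  · rintro x U hU
    filter_upwards [hg x U hU] with y hy
    rintro ⟨_, i, rfl⟩
    exact hy i
  · obtain ⟨C, hC⟩ := hbd x
    refine ⟨Metric.closedBall 0 C, isCompact_closedBall 0 C, ?_⟩
    rintro _ ⟨i, rfl⟩
    exact mem_closedBall_zero_iff.2 (hC i)

lemma exists_subseq_tendsto_of_equicontinuous {X : Type*} [TopologicalSpace X]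
    [WeaklyLocallyCompactSpace X] [SigmaCompactSpace X] {κ : Type*} [Countable κ] {F : κ → Type*}
    [∀ k, NormedAddCommGroup (F k)] [∀ k, ProperSpace (F k)] {g : ℕ → ∀ k, C(X, F k)}
    (hg : ∀ k, Equicontinuous fun n => ⇑(g n k)) (hbd : ∀ k x, ∃ C, ∀ n, ‖g n k x‖ ≤ C) :
    ∃ φ : ℕ → ℕ, StrictMono φ ∧ ∃ G : ∀ k, C(X, F k), Tendsto (g ∘ φ) atTop (nhds G) := by
  obtain ⟨G, -, φ, hφ, hG⟩ := (isCompact_univ_pi fun k =>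
    isCompact_closure_range_of_equicontinuous (hg k) (hbd k)).tendsto_subseq (x := g)
    fun n k _ => subset_closure (mem_range_self n)
  exact ⟨φ, hφ, G, hG⟩

variable {E F : Type*} [NormedAddCommGroup E] [NormedSpace ℝ E] [NormedAddCommGroup F]
  [NormedSpace ℝ F] {Ω : Set E} {ι : Type*} {u : ι → E → F}

/-- All derivatives of the family `u` are bounded on compact subsets of `Ω`, uniformly in the
index. -/
def JetsBounded (Ω : Set E) (u : ι → E → F) : Prop :=
  ∀ k : ℕ, ∀ K : Set E, IsCompact K → K ⊆ Ω →
    ∃ C, ∀ i, ∀ x ∈ K, ‖iteratedFDeriv ℝ k (u i) x‖ ≤ C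

lemma differentiableAt_iteratedFDeriv_of_contDiffOn {f : E → F}
    (hf : ContDiffOn ℝ (⊤ : ℕ∞) f Ω) (hΩ : IsOpen Ω) {x : E} (hx : x ∈ Ω) (k : ℕ) :
    DifferentiableAt ℝ (iteratedFDeriv ℝ k f) x :=
  (hf.contDiffAt (hΩ.mem_nhds hx)).differentiableAt_iteratedFDeriv
    (mod_cast WithTop.coe_lt_top k)

/-- The bound on the derivatives of order `k + 1` makes those of order `k` equi-Lipschitz. -/
lemma JetsBounded.equicontinuousAt [ProperSpace E] (hb : JetsBounded Ω u) (hΩ : IsOpen Ω)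
    (hu : ∀ i, ContDiffOn ℝ (⊤ : ℕ∞) (u i) Ω) (k : ℕ) {x : E} (hx : x ∈ Ω) :
    EquicontinuousAt (fun i => iteratedFDeriv ℝ k (u i)) x := by
  obtain ⟨r, hr, hrΩ⟩ := Metric.nhds_basis_closedBall.mem_iff.1 (hΩ.mem_nhds hx)
  obtain ⟨C, hC⟩ := hb (k + 1) _ (isCompact_closedBall x r) hrΩ
  refine Metric.equicontinuousAt_of_continuity_modulus (fun y => C * ‖y - x‖) ?_ _ ?_
  · exact Continuous.tendsto' (by fun_prop) _ _ (by simp)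
  · filter_upwards [Metric.closedBall_mem_nhds x hr] with y hy i
    rw [dist_comm, dist_eq_norm]
    refine (convex_closedBall x r).norm_image_sub_le_of_norm_fderiv_le (𝕜 := ℝ)
      (fun z hz => differentiableAt_iteratedFDeriv_of_contDiffOn (hu i) hΩ (hrΩ hz) k)
      (fun z hz => ?_) (Metric.mem_closedBall_self hr.le) hy
    rw [norm_fderiv_iteratedFDeriv]
    exact hC i z hz

lemma JetsBounded.exists_subseq_tendstoUniformlyOn [FiniteDimensional ℝ E] [FiniteDimensional ℝ F]
    {u : ℕ → E → F} (hb : JetsBounded Ω u) (hΩ : IsOpen Ω)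
    (hu : ∀ n, ContDiffOn ℝ (⊤ : ℕ∞) (u n) Ω) :
    ∃ φ : ℕ → ℕ, StrictMono φ ∧ ∃ G : E → FormalMultilinearSeries ℝ E F, ∀ k, ∀ K, IsCompact K →
      K ⊆ Ω → TendstoUniformlyOn (fun n => iteratedFDeriv ℝ k (u (φ n))) (fun x => G x k) atTop
        K := by
  have := FiniteDimensional.proper_real E
  have (k : ℕ) : ProperSpace (E [×k]→L[ℝ] F) :=
    have : FiniteDimensional ℝ (E [×k]→L[ℝ] F) := .of_injective
      ContinuousMultilinearMap.toMultilinearMapLinear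
      ContinuousMultilinearMap.toMultilinearMap_injective
    FiniteDimensional.proper_real _
  have := hΩ.locallyCompactSpace
  let g (n k : ℕ) : C(Ω, E [×k]→L[ℝ] F) := ⟨fun x => iteratedFDeriv ℝ k (u n) x,
    continuous_iff_continuousAt.2 fun x => (differentiableAt_iteratedFDeriv_of_contDiffOn (hu n) hΩ
      x.2 k).continuousAt.comp continuousAt_subtype_val⟩
  obtain ⟨φ, hφ, G, hG⟩ := exists_subseq_tendsto_of_equicontinuous (g := g)
    (fun k x U hU => continuousAt_subtype_val.eventually (hb.equicontinuousAt hΩ hu k x.2 U hU))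
    fun k x => by
      obtain ⟨C, hC⟩ := hb k {x.1} isCompact_singleton (singleton_subset_iff.2 x.2)
      exact ⟨C, fun n => hC n x rfl⟩
  classical
  refine ⟨φ, hφ, fun x k => if hx : x ∈ Ω then G k ⟨x, hx⟩ else 0, fun k K hK hKΩ => ?_⟩
  have hGk := ContinuousMap.tendsto_iff_forall_isCompact_tendstoUniformlyOn.1
    (tendsto_pi_nhds.1 hG k) _ (Topology.IsInducing.subtypeVal.isCompact_preimage' hK (by simpa))
  intro U hU
  filter_upwards [hGk U hU] with n hn x hx
  rw [dif_pos (hKΩ hx)]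
  exact hn ⟨x, hKΩ hx⟩ hx

lemma hasFTaylorSeriesUpToOn_of_tendstoUniformlyOn [ProperSpace E] {l : Filter ι} [l.NeBot]
    (hΩ : IsOpen Ω) (hu : ∀ i, ContDiffOn ℝ (⊤ : ℕ∞) (u i) Ω)
    {G : E → FormalMultilinearSeries ℝ E F} (hG : ∀ k, ∀ K, IsCompact K → K ⊆ Ω →
      TendstoUniformlyOn (fun i => iteratedFDeriv ℝ k (u i)) (fun x => G x k) l K) :
    HasFTaylorSeriesUpToOn (⊤ : ℕ∞) (fun x => (G x 0).curry0) G Ω := by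
  have hloc (k) := (tendstoLocallyUniformlyOn_iff_forall_isCompact hΩ).2
    fun K hKΩ hK => hG k K hK hKΩ
  have hder (k : ℕ) (x) (hx : x ∈ Ω) :
      HasFDerivAt (fun x => G x k) (G x (k + 1)).curryLeft x := by
    refine hasFDerivAt_of_tendstoLocallyUniformlyOn hΩ
      ((continuousMultilinearCurryLeftEquiv ℝ (fun _ : Fin (k + 1) => E)
        F).isometry.uniformContinuous.comp_tendstoLocallyUniformlyOn (hloc (k + 1)))
      (fun i y hy => ?_) (fun y hy => (hloc k).tendsto_at hy) hx
    rw [← fderiv_iteratedFDeriv]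
    exact (differentiableAt_iteratedFDeriv_of_contDiffOn (hu i) hΩ hy k).hasFDerivAt
  exact ⟨fun _ _ => rfl, fun k _ x hx => (hder k x hx).hasFDerivWithinAt,
    fun k _ x hx => (hder k x hx).continuousAt.continuousWithinAt⟩

theorem JetsBounded.exists_subseq_tendstoUniformlyOn_iteratedFDeriv [FiniteDimensional ℝ E]
    [FiniteDimensional ℝ F] {u : ℕ → E → F} (hb : JetsBounded Ω u) (hΩ : IsOpen Ω)
    (hu : ∀ n, ContDiffOn ℝ (⊤ : ℕ∞) (u n) Ω) :
    ∃ φ : ℕ → ℕ, StrictMono φ ∧ ∃ v : E → F, ContDiffOn ℝ (⊤ : ℕ∞) v Ω ∧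
      ∀ k : ℕ, ∀ K : Set E, IsCompact K → K ⊆ Ω →
        TendstoUniformlyOn (fun n p => iteratedFDeriv ℝ k (u (φ n)) p) (iteratedFDeriv ℝ k v)
          atTop K := by
  have := FiniteDimensional.proper_real E
  obtain ⟨φ, hφ, G, hG⟩ := hb.exists_subseq_tendstoUniformlyOn hΩ hu
  have htaylor := hasFTaylorSeriesUpToOn_of_tendstoUniformlyOn hΩ (fun n => hu (φ n)) hG
  refine ⟨φ, hφ, _, htaylor.contDiffOn, fun k K hK hKΩ => (hG k K hK hKΩ).congr_right ?_⟩
  intro x hx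
  rw [← iteratedFDerivWithin_of_isOpen k hΩ (hKΩ hx)]
  exact htaylor.eq_iteratedFDerivWithin_of_uniqueDiffOn (mod_cast le_top) hΩ.uniqueDiffOn (hKΩ hx)

end SmoothCompactness

section JetBounds

variable {ι : Type*} {Ω : Opens (ℝ × ℝ)}

lemma SmoothFam.eqOn_fderiv_extend (f : SmoothFam ι Ω) (i : ι) : EqOn (fderiv ℝ (f.extend i))
    (.toSpanSingleton ℝ (.fst ℝ ℝ ℝ) ∘ (dX f).extend i +
      .toSpanSingleton ℝ (.snd ℝ ℝ ℝ) ∘ (dY f).extend i) Ω := fun x hx => by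
  refine ContinuousLinearMap.ext fun v => ?_
  have hv : v = v.1 • (1, 0) + v.2 • ((0, 1) : ℝ × ℝ) := by ext <;> simp
  have hlin : fderiv ℝ (f.extend i) x v = v.1 * fderiv ℝ (f.extend i) x (1, 0) +
      v.2 * fderiv ℝ (f.extend i) x (0, 1) := by
    conv_lhs => rw [hv, map_add, map_smul, map_smul, smul_eq_mul, smul_eq_mul]
  simp [hlin, dX, dY, extend_dirDer _ f i hx, mul_comm]

lemma LocBddDer.exists_bound_iteratedFDeriv {k : ℕ} {f : SmoothFam ι Ω} (hf : LocBddDer k f)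
    {K : Set (ℝ × ℝ)} (hK : IsCompact K) (hKΩ : K ⊆ Ω) :
    ∃ C, ∀ i, ∀ x ∈ K, ‖iteratedFDeriv ℝ k (f.extend i) x‖ ≤ C := by
  induction k generalizing f with
  | zero =>
    obtain ⟨C, -, hC⟩ := LocBdd.exists_bound_of_isCompact hf hK hKΩ
    refine ⟨C, fun i x hx => ?_⟩
    rw [norm_iteratedFDeriv_zero, Real.norm_eq_abs, f.extend_apply i ⟨x, hKΩ hx⟩]
    exact hC i ⟨x, hKΩ hx⟩ hx
  | succ k ih =>
    obtain ⟨C, hC⟩ := ih hf.2.1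
    obtain ⟨D, hD⟩ := ih hf.2.2
    refine ⟨‖ContinuousLinearMap.toSpanSingleton ℝ (ContinuousLinearMap.fst ℝ ℝ ℝ)‖ * C +
      ‖ContinuousLinearMap.toSpanSingleton ℝ (ContinuousLinearMap.snd ℝ ℝ ℝ)‖ * D, ?_⟩
    intro i x hx
    have hsmooth (g : SmoothFam ι Ω) : ContDiffAt ℝ k (g.extend i) x :=
      (g.contDiffAt i ⟨x, hKΩ hx⟩).of_le (mod_cast le_top)
    rw [← norm_iteratedFDeriv_fderiv, (((f.eqOn_fderiv_extend i).eventuallyEq_of_mem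
      (Ω.isOpen.mem_nhds (hKΩ hx))).iteratedFDeriv ℝ k).eq_of_nhds, iteratedFDeriv_add_apply
      ((hsmooth _).continuousLinearMap_comp _) ((hsmooth _).continuousLinearMap_comp _)]
    refine (norm_add_le _ _).trans (add_le_add ?_ ?_)
    · refine (ContinuousLinearMap.norm_iteratedFDeriv_comp_left _ (hsmooth _) le_rfl).trans ?_
      gcongr
      exact hC i x hx
    · refine (ContinuousLinearMap.norm_iteratedFDeriv_comp_left _ (hsmooth _) le_rfl).trans ?_
      gcongr
      exact hD i x hx

end JetBounds

section Solutions

lemma contDiffOn_pdx {U : Set (ℝ × ℝ)} (hU : IsOpen U) {f : ℝ × ℝ → ℝ}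
    (hf : ContDiffOn ℝ (⊤ : ℕ∞) f U) : ContDiffOn ℝ (⊤ : ℕ∞) (pdx f) U :=
  (hf.fderiv_of_isOpen hU (by norm_cast)).clm_apply contDiffOn_const

lemma contDiffOn_pdy {U : Set (ℝ × ℝ)} (hU : IsOpen U) {f : ℝ × ℝ → ℝ}
    (hf : ContDiffOn ℝ (⊤ : ℕ∞) f U) : ContDiffOn ℝ (⊤ : ℕ∞) (pdy f) U :=
  (hf.fderiv_of_isOpen hU (by norm_cast)).clm_apply contDiffOn_const

lemma Wgraph_pos (f : ℝ × ℝ → ℝ) (x : ℝ × ℝ) : 0 < Wgraph f x :=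
  Real.sqrt_pos.2 (by positivity)

lemma Wgraph_sq (f : ℝ × ℝ → ℝ) (x : ℝ × ℝ) : Wgraph f x ^ 2 = 1 + pdx f x ^ 2 + pdy f x ^ 2 :=
  Real.sq_sqrt (by positivity)

lemma Wgraph_cube (f : ℝ × ℝ → ℝ) (x : ℝ × ℝ) :
    Wgraph f x ^ 3 = (1 + pdx f x ^ 2 + pdy f x ^ 2) ^ ((3 : ℝ) / 2) :=
  (Real.rpow_div_two_eq_sqrt 3 (by positivity)).trans (Real.rpow_natCast _ 3) |>.symm

lemma contDiffOn_Wgraph {U : Set (ℝ × ℝ)} (hU : IsOpen U) {f : ℝ × ℝ → ℝ}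
    (hf : ContDiffOn ℝ (⊤ : ℕ∞) f U) : ContDiffOn ℝ (⊤ : ℕ∞) (Wgraph f) U :=
  ((contDiffOn_const.add ((contDiffOn_pdx hU hf).pow 2)).add ((contDiffOn_pdy hU hf).pow 2)).sqrt
    fun _ _ => by positivity

variable {ι : Type*} {Ω : Opens (ℝ × ℝ)} {H : ℝ} {u : ι → ℝ × ℝ → ℝ}

lemma SmoothFam.dX_of (hu : ∀ i, ContDiffOn ℝ (⊤ : ℕ∞) (u i) Ω) :
    dX (of u hu) = of (fun i => pdx (u i)) fun i => contDiffOn_pdx Ω.isOpen (hu i) := by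
  ext i x
  exact DFunLike.congr_fun
    ((extend_of u hu i).eventuallyEq_of_mem (Ω.isOpen.mem_nhds x.2)).fderiv_eq (1, 0)

lemma SmoothFam.dY_of (hu : ∀ i, ContDiffOn ℝ (⊤ : ℕ∞) (u i) Ω) :
    dY (of u hu) = of (fun i => pdy (u i)) fun i => contDiffOn_pdy Ω.isOpen (hu i) := by
  ext i x
  exact DFunLike.congr_fun
    ((extend_of u hu i).eventuallyEq_of_mem (Ω.isOpen.mem_nhds x.2)).fderiv_eq (0, 1)

lemma isCMCJet_of_isSmoothCMCSolution (hu : ∀ i, IsSmoothCMCSolution H Ω (u i)) :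
    IsCMCJet H dX dY (of u fun i => (hu i).1)
      (of (fun i => Wgraph (u i)) fun i => contDiffOn_Wgraph Ω.isOpen (hu i).1)
      (of (fun i x => (Wgraph (u i) x)⁻¹) fun i =>
        (contDiffOn_Wgraph Ω.isOpen (hu i).1).inv fun x _ => (Wgraph_pos (u i) x).ne') where
  comm := dX_dY_comm
  sq := by
    rw [dX_of, dY_of]
    ext i x
    exact Wgraph_sq (u i) x
  inv := by
    ext i x
    exact mul_inv_cancel₀ (Wgraph_pos (u i) x).ne'
  eqn := by
    rw [ellOp_apply]
    simp only [dX_of, dY_of]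
    ext i x
    have hx := (hu i).2 x x.2
    rw [← Wgraph_cube] at hx
    simp only [map_add, map_sub, map_mul, map_smul, map_pow, map_one, map_ofNat, smul_eq_mul,
      evAt_of]
    linear_combination hx

lemma jetsBounded_of_isSmoothCMCSolution {Ω : Set (ℝ × ℝ)} (hΩ : IsOpen Ω)
    (hu : ∀ i, IsSmoothCMCSolution H Ω (u i))
    (hbd : ∀ K, IsCompact K → K ⊆ Ω → ∃ M, ∀ i, ∀ p ∈ K, |u i p| ≤ M) : JetsBounded Ω u := by
  lift Ω to Opens (ℝ × ℝ) using hΩ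
  have hmem : of u (fun i => (hu i).1) ∈ LocBdd ι Ω := fun x₀ => by
    obtain ⟨K, hK, hx₀, hKΩ⟩ := exists_compact_subset Ω.isOpen x₀.2
    obtain ⟨M, hM⟩ := hbd K hK hKΩ
    refine ⟨M, ?_⟩
    filter_upwards [continuousAt_subtype_val (mem_interior_iff_mem_nhds.1 hx₀)] with x hx i
    exact hM i x hx
  intro k K hK hKΩ
  obtain ⟨C, hC⟩ := ((isCMCJet_of_isSmoothCMCSolution hu).locBddDer
    (fun i x => Wgraph_pos (u i) x) hmem k).exists_bound_iteratedFDeriv hK hKΩ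
  refine ⟨C, fun i x hx => ?_⟩
  rw [← (((extend_of u _ i).eventuallyEq_of_mem
    (Ω.isOpen.mem_nhds (hKΩ hx))).iteratedFDeriv ℝ k).eq_of_nhds]
  exact hC i x hx

lemma fderiv_fderiv_apply_eq_iteratedFDeriv {E F : Type*} [NormedAddCommGroup E]
    [NormedSpace ℝ E] [NormedAddCommGroup F] [NormedSpace ℝ F] {f : E → F} {p : E}
    (hf : ContDiffAt ℝ 2 f p) (a b : E) :
    fderiv ℝ (fun q => fderiv ℝ f q a) p b = iteratedFDeriv ℝ 2 f p ![b, a] := by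
  have hd : DifferentiableAt ℝ (fderiv ℝ f) p :=
    (hf.fderiv_right (m := 1) (by norm_num)).differentiableAt (by simp)
  rw [iteratedFDeriv_two_apply, fderiv_clm_apply hd (differentiableAt_const a)]
  simp

lemma isSmoothCMCSolution_of_tendsto {Ω : Set (ℝ × ℝ)} (hΩ : IsOpen Ω) {l : Filter ι} [l.NeBot]
    {v : ℝ × ℝ → ℝ} (hu : ∀ i, IsSmoothCMCSolution H Ω (u i)) (hv : ContDiffOn ℝ (⊤ : ℕ∞) v Ω)
    (hlim : ∀ k : ℕ, ∀ p ∈ Ω,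
      Tendsto (fun i => iteratedFDeriv ℝ k (u i) p) l (nhds (iteratedFDeriv ℝ k v p))) :
    IsSmoothCMCSolution H Ω v := by
  refine ⟨hv, fun p hp => ?_⟩
  have hfirst (a : ℝ × ℝ) : Tendsto (fun i => fderiv ℝ (u i) p a) l (nhds (fderiv ℝ v p a)) := by
    simpa [Function.comp_def, iteratedFDeriv_one_apply] using
      ((ContinuousMultilinearMap.apply ℝ (fun _ : Fin 1 => ℝ × ℝ) ℝ
        ![a]).continuous.tendsto _).comp (hlim 1 p hp)
  have hsecond (a b : ℝ × ℝ) : Tendsto (fun i => fderiv ℝ (fun q => fderiv ℝ (u i) q a) p b) l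
      (nhds (fderiv ℝ (fun q => fderiv ℝ v q a) p b)) := by
    have hsmooth {f : ℝ × ℝ → ℝ} (hf : ContDiffOn ℝ (⊤ : ℕ∞) f Ω) : ContDiffAt ℝ 2 f p :=
      (hf.contDiffAt (hΩ.mem_nhds hp)).of_le (by norm_cast)
    rw [fderiv_fderiv_apply_eq_iteratedFDeriv (hsmooth hv)]
    simp only [fun i => fderiv_fderiv_apply_eq_iteratedFDeriv (hsmooth (hu i).1)]
    exact ((ContinuousMultilinearMap.apply ℝ (fun _ : Fin 2 => ℝ × ℝ) ℝ
      ![b, a]).continuous.tendsto _).comp (hlim 2 p hp)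
  have hx := hfirst (1, 0)
  have hy := hfirst (0, 1)
  have hleft := ((((hy.pow 2).const_add 1).mul (hsecond (1, 0) (1, 0))).sub
    (((hx.const_mul 2).mul hy).mul (hsecond (1, 0) (0, 1)))).add
    (((hx.pow 2).const_add 1).mul (hsecond (0, 1) (0, 1)))
  have hright := ((((hx.pow 2).const_add 1).add (hy.pow 2)).rpow_const
    (p := (3 : ℝ) / 2) (.inr (by norm_num))).const_mul (2 * H)
  exact tendsto_nhds_unique hleft (hright.congr fun i => ((hu i).2 p hp).symm)

end Solutions

theorem stmt_1_general (H : ℝ) (Ω : Set (ℝ × ℝ)) (hΩ : IsOpen Ω) (u : ℕ → ℝ × ℝ → ℝ)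
    (hu : ∀ n, IsSmoothCMCSolution H Ω (u n))
    (hbd : ∀ K : Set (ℝ × ℝ), IsCompact K → K ⊆ Ω → ∃ M, ∀ n, ∀ p ∈ K, |u n p| ≤ M) :
    ∃ φ : ℕ → ℕ, StrictMono φ ∧ ∃ v : ℝ × ℝ → ℝ, IsSmoothCMCSolution H Ω v ∧
      ∀ k : ℕ, ∀ K : Set (ℝ × ℝ), IsCompact K → K ⊆ Ω →
        TendstoUniformlyOn (fun n p => iteratedFDeriv ℝ k (u (φ n)) p)
          (iteratedFDeriv ℝ k v) atTop K := by
  have hjets : JetsBounded Ω u := jetsBounded_of_isSmoothCMCSolution hΩ hu hbd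
  obtain ⟨φ, hφ, v, hv, hconv⟩ :=
    hjets.exists_subseq_tendstoUniformlyOn_iteratedFDeriv hΩ fun n => (hu n).1
  have hpointwise (k : ℕ) (p : ℝ × ℝ) (hp : p ∈ Ω) :
      Tendsto (fun n => iteratedFDeriv ℝ k (u (φ n)) p) atTop (nhds (iteratedFDeriv ℝ k v p)) :=
    (hconv k {p} isCompact_singleton (singleton_subset_iff.2 hp)).tendsto_at rfl
  exact ⟨φ, hφ, v, isSmoothCMCSolution_of_tendsto hΩ (fun n => hu (φ n)) hv hpointwise, hconv⟩

/-- a uniformly bounded sequence of solutions of (CMC) has a subsequence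
converging, in C^k on every compact subset for every k, to a solution. -/
theorem stmt_1 (H : ℝ) (hH : 0 < H) (Ω : Set (ℝ × ℝ)) (hΩ : IsOpen Ω)
    (hΩconn : IsConnected Ω) (u : ℕ → ℝ × ℝ → ℝ)
    (hu : ∀ n, IsSmoothCMCSolution H Ω (u n))
    (M : ℝ) (hbd : ∀ n, ∀ p ∈ Ω, |u n p| ≤ M) :
    ∃ φ : ℕ → ℕ, StrictMono φ ∧ ∃ v : ℝ × ℝ → ℝ, IsSmoothCMCSolution H Ω v ∧
      ∀ k : ℕ, ∀ K : Set (ℝ × ℝ), IsCompact K → K ⊆ Ω →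
        TendstoUniformlyOn (fun n p => iteratedFDeriv ℝ k (u (φ n)) p)
          (iteratedFDeriv ℝ k v) atTop K :=
  stmt_1_general H Ω hΩ u hu fun _ _ hKΩ => ⟨M, fun n p hp => hbd n p (hKΩ hp)⟩
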